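/- Let a₁, …, a_k ∈ [1,γ] \ {1} and P, X₁, …, X_k ∈ Γ₊ with P = ⟨a₁⟩·X₁ = ⋯ = ⟨a_k⟩·X_k in Γ₊. Then there exist j ∈ [1,γ] and Z ∈ Γ₊ such that j is a least upper bound of {a₁, …, a_k} in ([1,γ],≤) and P = ⟨j⟩·Z in Γ₊. -/

import Mathlib

/-!
For the geometric representation of `W`, reflection length is the dimension of the moved space
`mov w = im (w - 1)` (Carter's lemma), and on `[1,γ]` the reflection order is inclusion of moved
spaces. A moved space is spanned by the positive roots it contains; let `C α` be the cone spanned by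
the positive roots in `mov α`.

*The interval `[1,γ]` is a lattice.* The main point is that for a product `c = s₁ ⋯ sₙ` of distinct
simple reflections and a nonnegative vector `x` supported on them there is `δ ≤ c` with `x ∈ mov δ`
lying below every `α ≤ c` with `x ∈ C α`. If `s₁` makes the first coordinate of `x` negative, then
`e₁ ∈ mov α` for all these `α`, and since `C α` is spanned by `e₁` and `C (s₁ α)` the problem
reduces to `s₂ ⋯ sₙ` and the vector `x` with its first coordinate removed. Otherwise conjugation by
`s₁` leads to `s₂ ⋯ sₙ s₁` and the nonnegative vector `s₁ x`. This cannot go on forever for `x ≠ 0`: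
the orbit of `x` under `c` sums to a vector fixed by `c`, and `c` fixes only `0` in its moved space.
The meet of a family in `[1,γ]` is the `δ` of a generic vector `x` in the cone of the positive roots
common to all its moved spaces; joins are meets of upper bounds.

*The monoid acts on the lattice.* The generator `⟨w⟩` sends `v` to `w (v ∧ w⁻¹γ)`, which respects
the defining relations. The image of `1` under `P` is the largest element of `[1,γ]` dividing `P` on
the left, so it lies above all `aᵢ`, hence above their join `j`, and `⟨j⟩` divides `P`.
-/

variable {B : Type*} {W : Type*} [Group W] {M : CoxeterMatrix B}

/-- The reflection length of `w`: the least `k` such that `w` is a product of `k`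
reflections (conjugates of simple reflections). -/
noncomputable def rlen (cs : CoxeterSystem M W) (w : W) : ℕ :=
  sInf {k | ∃ l : List W, (∀ t ∈ l, cs.IsReflection t) ∧ l.length = k ∧ l.prod = w}

/-- The reflection (absolute) order on `W`: `u ≤ w` iff `ℓ(w) = ℓ(u) + ℓ(u⁻¹w)`. -/
def rle (cs : CoxeterSystem M W) (u w : W) : Prop :=
  rlen cs w = rlen cs u + rlen cs (u⁻¹ * w)

/-- A Coxeter element: a conjugate of a product of all the simple reflections,
each occurring exactly once, in some order. -/
def IsCoxeterElement [Fintype B] (cs : CoxeterSystem M W) (γ : W) : Prop :=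
  ∃ (v : W) (l : List B), l.Nodup ∧ (∀ i : B, i ∈ l) ∧ γ = v * cs.wordProd l * v⁻¹

/-- `p` is a least upper bound of the set `s` within the interval `[1,γ]`
under the reflection order. -/
def IsIntervalLUB (cs : CoxeterSystem M W) (γ : W) (s : Set W) (p : W) : Prop :=
  rle cs p γ ∧ (∀ x ∈ s, rle cs x p) ∧
    ∀ r, rle cs r γ → (∀ x ∈ s, rle cs x r) → rle cs p r

/-- The generating set of the poset group/monoid: the interval `[1,γ]` minus the identity. -/
abbrev NCGen (cs : CoxeterSystem M W) (γ : W) : Type _ :=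
  {w : W // w ≠ 1 ∧ rle cs w γ}

/-- The defining relations of the positive monoid `Γ₊(W,γ)`:
`⟨w₁⟩⟨w₂⟩ = ⟨w₃⟩` whenever `w₁w₂ = w₃` in `W` and `ℓ(w₁) + ℓ(w₂) = ℓ(w₃)`. -/
def posRels (cs : CoxeterSystem M W) (γ : W) :
    FreeMonoid (NCGen cs γ) → FreeMonoid (NCGen cs γ) → Prop :=
  fun x y => ∃ w₁ w₂ w₃ : NCGen cs γ,
    x = FreeMonoid.of w₁ * FreeMonoid.of w₂ ∧ y = FreeMonoid.of w₃ ∧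
    (w₁ : W) * (w₂ : W) = (w₃ : W) ∧
    rlen cs (w₁ : W) + rlen cs (w₂ : W) = rlen cs (w₃ : W)

/-- The positive monoid `Γ₊(W,γ)`, presented by the generators `⟨w⟩`, `w ∈ [1,γ] \ {1}`,
and the relations `posRels`. -/
abbrev PosMonoid (cs : CoxeterSystem M W) (γ : W) := PresentedMonoid (posRels cs γ)

open Classical in
/-- The generator `⟨w⟩` of `Γ₊(W,γ)` for `w ∈ [1,γ]`, interpreting `⟨1⟩` as the
identity of the monoid (and defaulting to the identity off the interval). -/
noncomputable def pgen (cs : CoxeterSystem M W) (γ : W) (w : W) : PosMonoid cs γ :=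
  if h : w ≠ 1 ∧ rle cs w γ then PresentedMonoid.of (posRels cs γ) ⟨w, h⟩ else 1

/-! ### The reflection order -/

section ReflectionOrder

variable {cs : CoxeterSystem M W} {u v w γ : W}

theorem rlen_prod_le_length {l : List W} (hl : ∀ t ∈ l, cs.IsReflection t) :
    rlen cs l.prod ≤ l.length :=
  Nat.sInf_le ⟨l, hl, rfl, rfl⟩

variable (cs) in
theorem exists_reflection_word (w : W) :
    ∃ l : List W, (∀ t ∈ l, cs.IsReflection t) ∧ l.length = rlen cs w ∧ l.prod = w := by
  obtain ⟨l, rfl⟩ := cs.wordProd_surjective w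
  have hl : ∀ t ∈ l.map cs.simple, cs.IsReflection t := by
    simpa using fun i _ => cs.isReflection_simple i
  exact Nat.sInf_mem (s := {k | ∃ l' : List W,
    (∀ t ∈ l', cs.IsReflection t) ∧ l'.length = k ∧ l'.prod = cs.wordProd l}) ⟨_, _, hl, rfl, rfl⟩

theorem rlen_one : rlen cs 1 = 0 := by
  simpa using rlen_prod_le_length (cs := cs) (l := []) (by simp)

theorem rlen_eq_zero_iff : rlen cs w = 0 ↔ w = 1 := by
  refine ⟨fun h => ?_, fun h => h ▸ rlen_one⟩
  obtain ⟨l, -, hlen, rfl⟩ := exists_reflection_word cs w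
  rw [List.eq_nil_of_length_eq_zero (hlen.trans h), List.prod_nil]

theorem rlen_mul_le (u v : W) : rlen cs (u * v) ≤ rlen cs u + rlen cs v := by
  obtain ⟨l, hl, hlu, rfl⟩ := exists_reflection_word cs u
  obtain ⟨l', hl', hlv, rfl⟩ := exists_reflection_word cs v
  rw [← hlu, ← hlv, ← List.length_append, ← List.prod_append]
  exact rlen_prod_le_length fun t ht => (List.mem_append.1 ht).elim (hl t) (hl' t)

theorem rlen_conj (g w : W) : rlen cs (g * w * g⁻¹) = rlen cs w := by
  have conj_le (g w : W) : rlen cs (g * w * g⁻¹) ≤ rlen cs w := by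
    obtain ⟨l, hl, hlw, rfl⟩ := exists_reflection_word cs w
    rw [← hlw, ← MulAut.conj_apply, map_list_prod, ← List.length_map (MulAut.conj g)]
    refine rlen_prod_le_length fun t ht => ?_
    obtain ⟨s, hs, rfl⟩ := List.mem_map.1 ht
    exact (hl s hs).conj g
  refine (conj_le g w).antisymm ?_
  simpa [mul_assoc] using conj_le g⁻¹ (g * w * g⁻¹)

theorem one_rle (w : W) : rle cs 1 w := by simp [rle, rlen_one]

theorem rle_refl (w : W) : rle cs w w := by simp [rle, rlen_one]

theorem rle_mul_right_iff : rle cs u (u * v) ↔ rlen cs (u * v) = rlen cs u + rlen cs v := by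
  rw [rle, inv_mul_cancel_left]

theorem rle.rlen_le (h : rle cs u w) : rlen cs u ≤ rlen cs w :=
  (Nat.le_add_right _ _).trans_eq h.symm

theorem rle.trans (huv : rle cs u v) (hvw : rle cs v w) : rle cs u w := by
  have h₁ := rlen_mul_le (cs := cs) (u⁻¹ * v) (v⁻¹ * w)
  have h₂ := rlen_mul_le (cs := cs) u (u⁻¹ * w)
  rw [mul_assoc, mul_inv_cancel_left] at h₁
  rw [mul_inv_cancel_left] at h₂
  unfold rle at *
  omega

theorem rle.antisymm (huw : rle cs u w) (hwu : rle cs w u) : u = w := by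
  have := hwu.rlen_le
  unfold rle at huw
  exact inv_mul_eq_one.1 (rlen_eq_zero_iff (cs := cs).1 (by omega))

theorem rle_conj_iff (g : W) : rle cs (g * u * g⁻¹) (g * w * g⁻¹) ↔ rle cs u w := by
  have hconj : (g * u * g⁻¹)⁻¹ * (g * w * g⁻¹) = g * (u⁻¹ * w) * g⁻¹ := by group
  simp only [rle, hconj, rlen_conj]

theorem rle.inv_mul_rle (h : rle cs u w) : rle cs (u⁻¹ * w) w := by
  have hconj : (u⁻¹ * w)⁻¹ * w = w⁻¹ * u * w⁻¹⁻¹ := by group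
  rw [rle, hconj, rlen_conj, add_comm]
  exact h

theorem rle.inv_mul_rle_inv_mul (huv : rle cs u v) (hvw : rle cs v w) :
    rle cs (u⁻¹ * v) (u⁻¹ * w) := by
  have huw := huv.trans hvw
  have hcancel : (u⁻¹ * v)⁻¹ * (u⁻¹ * w) = v⁻¹ * w := by group
  unfold rle at *
  rw [hcancel]
  omega

theorem rle.rle_mul_and_mul_rle (hu : rle cs u w) (hv : rle cs v (u⁻¹ * w)) :
    rle cs u (u * v) ∧ rle cs (u * v) w := by
  have h₁ := rlen_mul_le (cs := cs) u v
  have h₂ := rlen_mul_le (cs := cs) (u * v) ((u * v)⁻¹ * w)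
  have hcancel : v⁻¹ * (u⁻¹ * w) = (u * v)⁻¹ * w := by group
  rw [mul_inv_cancel_left] at h₂
  unfold rle at *
  rw [inv_mul_cancel_left]
  rw [hcancel] at hv
  omega

theorem rle.of_inv_mul_rle_inv_mul (hu : rle cs u w)
    (h : rle cs (u⁻¹ * v) (u⁻¹ * w)) : rle cs v w := by
  have := hu.rle_mul_and_mul_rle h |>.2
  rwa [mul_inv_cancel_left] at this

/-- The interval `[1,γ]`, ordered by the reflection order. -/
abbrev NCInterval (cs : CoxeterSystem M W) (γ : W) : Type _ := {w : W // rle cs w γ}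

instance : PartialOrder (NCInterval cs γ) where
  le u v := rle cs u.1 v.1
  le_refl u := rle_refl u.1
  le_trans _ _ _ := rle.trans
  le_antisymm _ _ huv hvu := Subtype.ext (huv.antisymm hvu)

instance : OrderBot (NCInterval cs γ) where
  bot := ⟨1, one_rle γ⟩
  bot_le u := one_rle u.1

/-- Conjugation by `g`, as an isomorphism from `[1,γ]` to `[1, g γ g⁻¹]`. -/
def NCInterval.conjIso (cs : CoxeterSystem M W) (γ g : W) :
    NCInterval cs γ ≃o NCInterval cs (g * γ * g⁻¹) where
  toEquiv := (MulAut.conj g).toEquiv.subtypeEquiv fun _ => (rle_conj_iff g).symm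
  map_rel_iff' := rle_conj_iff g

theorem isIntervalLUB_of_isLUB {A : Set W} (hA : ∀ a ∈ A, rle cs a γ) {j : NCInterval cs γ}
    (hj : IsLUB (Subtype.val ⁻¹' A) j) : IsIntervalLUB cs γ A j.1 :=
  ⟨j.2, fun a ha => hj.1 (show (⟨a, hA a ha⟩ : NCInterval cs γ) ∈ _ from ha),
    fun r hr hAr => hj.2 (show (⟨r, hr⟩ : NCInterval cs γ) ∈ _ from fun x hx => hAr x hx)⟩

end ReflectionOrder

/-! ### The action of the positive monoid on the interval -/

section PositiveMonoid

variable {cs : CoxeterSystem M W} {γ : W}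

theorem pgen_one : pgen cs γ 1 = 1 := by simp [pgen]

theorem pgen_coe (w : NCGen cs γ) : pgen cs γ w = PresentedMonoid.of (posRels cs γ) w := by
  rw [pgen, dif_pos w.2]

theorem pgen_mul_pgen_inv_mul {u v : NCInterval cs γ} (h : u ≤ v) :
    pgen cs γ u * pgen cs γ (u.1⁻¹ * v) = pgen cs γ v := by
  rcases eq_or_ne u.1 1 with hu | hu
  · rw [hu, pgen_one, inv_one, one_mul, one_mul]
  rcases eq_or_ne (u.1⁻¹ * v) 1 with huv | huv
  · rw [huv, pgen_one, mul_one, inv_mul_eq_one.1 huv]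
  have hv : v.1 ≠ 1 := fun hv =>
    hu (congrArg Subtype.val (le_bot_iff.1 (h.trans_eq (Subtype.ext hv : v = ⊥))))
  let a : NCGen cs γ := ⟨u, hu, u.2⟩
  let b : NCGen cs γ := ⟨u.1⁻¹ * v, huv, h.inv_mul_rle.trans v.2⟩
  let c : NCGen cs γ := ⟨v, hv, v.2⟩
  have hrel : posRels cs γ (.of a * .of b) (.of c) :=
    ⟨a, b, c, rfl, rfl, mul_inv_cancel_left _ _, h.symm⟩
  rw [pgen_coe a, pgen_coe b, pgen_coe c]
  exact PresentedMonoid.mk_eq_mk_of_rel hrel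

theorem pgen_dvd_pgen {u v : NCInterval cs γ} (h : u ≤ v) : pgen cs γ u ∣ pgen cs γ v :=
  ⟨_, (pgen_mul_pgen_inv_mul h).symm⟩

theorem exists_isGreatest_push (hglb : ∀ A : Set (NCInterval cs γ), ∃ g, IsGLB A g)
    (w v : NCInterval cs γ) :
    ∃ x, IsGreatest {x : NCInterval cs γ | w ≤ x ∧ rle cs (w.1⁻¹ * x) v} x := by
  obtain ⟨m, hm⟩ := hglb {v, ⟨w.1⁻¹ * γ, w.2.inv_mul_rle⟩}
  obtain ⟨hmv, hmw⟩ : m ≤ v ∧ rle cs m (w.1⁻¹ * γ) := ⟨hm.1 (.inl rfl), hm.1 (.inr rfl)⟩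
  obtain ⟨hwm, hwmγ⟩ := w.2.rle_mul_and_mul_rle hmw
  refine ⟨⟨w * m, hwmγ⟩, ⟨hwm, by rwa [inv_mul_cancel_left]⟩, fun y ⟨hwy, hyv⟩ => ?_⟩
  have hym : rle cs (w.1⁻¹ * y) m := by
    refine hm.2 (show (⟨w.1⁻¹ * y, hyv.trans v.2⟩ : NCInterval cs γ) ∈ _ from ?_)
    rintro _ (rfl | rfl)
    exacts [hyv, hwy.inv_mul_rle_inv_mul y.2]
  exact hwm.of_inv_mul_rle_inv_mul (by rwa [inv_mul_cancel_left])

variable (hglb : ∀ A : Set (NCInterval cs γ), ∃ g, IsGLB A g)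

/-- The action of `w` on `v` in `[1,γ]`: the largest `x` of the form `x = w * m` with
`ℓ(x) = ℓ(w) + ℓ(m)` and `m ≤ v`. -/
noncomputable def push (w v : NCInterval cs γ) : NCInterval cs γ :=
  (exists_isGreatest_push hglb w v).choose

theorem isGreatest_push (w v : NCInterval cs γ) :
    IsGreatest {x : NCInterval cs γ | w ≤ x ∧ rle cs (w.1⁻¹ * x) v} (push hglb w v) :=
  (exists_isGreatest_push hglb w v).choose_spec

theorem push_push {w₁ w₂ w₃ : NCInterval cs γ} (he : w₁.1 * w₂ = w₃) (h : w₁ ≤ w₃)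
    (v : NCInterval cs γ) : push hglb w₁ (push hglb w₂ v) = push hglb w₃ v := by
  obtain ⟨⟨hw₂, hv⟩, hmax₂⟩ := isGreatest_push hglb w₂ v
  obtain ⟨⟨hw₁, hx⟩, hmax₁⟩ := isGreatest_push hglb w₁ (push hglb w₂ v)
  set y := push hglb w₂ v
  set x := push hglb w₁ y
  have hinv (z : W) : w₃.1⁻¹ * z = w₂.1⁻¹ * (w₁.1⁻¹ * z) := by rw [← he]; group
  have hw₂_eq : w₁.1⁻¹ * w₃ = w₂ := by rw [← he, inv_mul_cancel_left]
  have w₂_rle {z : NCInterval cs γ} (hz : w₃ ≤ z) : rle cs w₂ (w₁.1⁻¹ * z) :=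
    hw₂_eq ▸ h.inv_mul_rle_inv_mul hz
  -- `z = w₃ m` with `m ≤ v` iff `w₁⁻¹ z = w₂ m` with `m ≤ v`, and then `w₁⁻¹ z ≤ y`
  have mem_lower {z : NCInterval cs γ} (hz : w₃ ≤ z) (hzv : rle cs (w₃.1⁻¹ * z) v) :
      rle cs (w₁.1⁻¹ * z) y :=
    hmax₂ (a := ⟨_, (h.trans hz).inv_mul_rle.trans z.2⟩) ⟨w₂_rle hz, hinv z ▸ hzv⟩
  have hw₃x : w₃ ≤ x := hmax₁ ⟨h, hw₂_eq ▸ hw₂⟩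
  refine (IsGreatest.unique (isGreatest_push hglb w₃ v) ⟨⟨hw₃x, ?_⟩, fun z ⟨hz, hzv⟩ => ?_⟩).symm
  · rw [hinv]
    exact ((w₂_rle hw₃x).inv_mul_rle_inv_mul hx).trans hv
  · exact hmax₁ ⟨h.trans hz, mem_lower hz hzv⟩

/-- The action of the positive monoid on `[1,γ]` in which `⟨w⟩` acts by `push w`. -/
noncomputable def pushHom : PosMonoid cs γ →* Function.End (NCInterval cs γ) :=
  PresentedMonoid.lift (M := Function.End (NCInterval cs γ))
    (fun w : NCGen cs γ => push hglb ⟨w, w.2.2⟩) (by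
      rintro _ _ ⟨w₁, w₂, w₃, rfl, rfl, he, hadd⟩
      have h : rle cs w₁.1 w₃ := by rw [← he, rle_mul_right_iff, he, hadd]
      exact funext fun v => push_push hglb he h v)

/-- The largest element of `[1,γ]` dividing `P` on the left. -/
noncomputable def head (P : PosMonoid cs γ) : NCInterval cs γ := pushHom hglb P ⊥

theorem head_of_mul (w : NCGen cs γ) (P : PosMonoid cs γ) :
    head hglb (PresentedMonoid.of _ w * P) = push hglb ⟨w, w.2.2⟩ (head hglb P) := by
  rw [head, map_mul]
  rfl

theorem pgen_head_dvd (P : PosMonoid cs γ) : pgen cs γ (head hglb P) ∣ P := by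
  induction P using Submonoid.induction_of_closure_eq_top_left
      (PresentedMonoid.closure_range_of (posRels cs γ)) with
  | one =>
    have head_one : head hglb (1 : PosMonoid cs γ) = ⊥ := by rw [head, map_one]; rfl
    rw [head_one]
    exact dvd_of_eq pgen_one
  | mul_left g hg P ih =>
    obtain ⟨w, rfl⟩ := hg
    rw [head_of_mul, ← pgen_coe]
    obtain ⟨⟨hwx, hx⟩, -⟩ := isGreatest_push hglb ⟨w, w.2.2⟩ (head hglb P)
    set x := push hglb ⟨w, w.2.2⟩ (head hglb P)
    rw [← pgen_mul_pgen_inv_mul hwx]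
    have hdvd := pgen_dvd_pgen (u := ⟨_, hwx.inv_mul_rle.trans x.2⟩) hx
    exact mul_dvd_mul_left _ (hdvd.trans ih)

theorem pgen_dvd_iff_le_head {w : NCInterval cs γ} {P : PosMonoid cs γ} :
    pgen cs γ w ∣ P ↔ w ≤ head hglb P := by
  refine ⟨?_, fun h => (pgen_dvd_pgen h).trans (pgen_head_dvd hglb P)⟩
  rintro ⟨X, rfl⟩
  by_cases hw : w.1 = 1
  · exact (show w = ⊥ from Subtype.ext hw) ▸ bot_le
  · rw [pgen_coe (⟨w.1, hw, w.2⟩ : NCGen cs γ), head_of_mul]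
    exact (isGreatest_push hglb w _).1.1

include hglb in
theorem exists_isLUB_pgen_dvd {A : Set (NCInterval cs γ)} {P : PosMonoid cs γ}
    (hP : ∀ a ∈ A, pgen cs γ a ∣ P) : ∃ j, IsLUB A j ∧ pgen cs γ j ∣ P := by
  obtain ⟨j, hj⟩ := hglb (upperBounds A)
  rw [isGLB_upperBounds] at hj
  exact ⟨j, hj, (pgen_dvd_iff_le_head hglb).2 <|
    hj.2 fun a ha => (pgen_dvd_iff_le_head hglb).1 (hP a ha)⟩

end PositiveMonoid

/-! ### The geometric representation -/

section AlternatingWords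

open CoxeterSystem (alternatingWord)

variable {cs : CoxeterSystem M W} {v w : W} {i j : B}

theorem not_isRightDescent_of_length_mul_wordProd_cons {l : List B}
    (h : cs.length (v * cs.wordProd (i :: l)) = cs.length v + l.length + 1) :
    ¬ cs.IsRightDescent v i := by
  intro hd
  have hlen := cs.length_mul_le (v * cs.simple i) (cs.wordProd l)
  rw [mul_assoc, ← cs.wordProd_cons, h] at hlen
  have := cs.length_wordProd_le l
  have := cs.isRightDescent_iff.1 hd
  omega

theorem eq_zero_or_lt_of_length_mul_alternatingWord {k : ℕ}
    (hlen : cs.length (v * cs.wordProd (alternatingWord i j k)) = cs.length v + k)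
    (hi : ¬ cs.IsRightDescent (v * cs.wordProd (alternatingWord i j k)) i) :
    M i j = 0 ∨ k < M i j := by
  by_contra! hM
  have length_mul_le (l : List B) : cs.length (v * cs.wordProd l) ≤ cs.length v + l.length :=
    (cs.length_mul_le _ _).trans (Nat.add_le_add_left (cs.length_wordProd_le l) _)
  obtain hk | hk := hM.2.lt_or_eq
  · refine cs.not_isReduced_alternatingWord i j hM.1 hk ?_
    have := cs.length_mul_le v (cs.wordProd (alternatingWord i j k))
    have := cs.length_wordProd_le (alternatingWord i j k)
    rw [CoxeterSystem.IsReduced, CoxeterSystem.length_alternatingWord] at *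
    omega
  · -- the braid relation makes `i` the last letter
    have hbraid : cs.wordProd (alternatingWord i j k) = cs.wordProd (alternatingWord j i k) := by
      simpa only [CoxeterSystem.braidWord, M.symmetric j i, hk] using cs.wordProd_braidWord_eq i j
    obtain ⟨k, rfl⟩ : ∃ n, k = n + 1 := Nat.exists_eq_succ_of_ne_zero (hk ▸ hM.1)
    apply hi
    rw [CoxeterSystem.IsRightDescent, hlen, hbraid, CoxeterSystem.alternatingWord_succ,
      cs.wordProd_concat, ← mul_assoc, cs.simple_mul_simple_cancel_right]
    have := length_mul_le (alternatingWord i j k)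
    rw [CoxeterSystem.length_alternatingWord] at this
    omega

theorem exists_mul_alternatingWord (hj : cs.IsRightDescent w j) (hi : ¬ cs.IsRightDescent w i) :
    ∃ v k, w = v * cs.wordProd (alternatingWord i j k) ∧ 0 < k ∧ (M i j = 0 ∨ k < M i j) ∧
      cs.length w = cs.length v + k ∧ ¬ cs.IsRightDescent v i ∧ ¬ cs.IsRightDescent v j := by
  classical
  let IsSuffix (k : ℕ) : Prop :=
    ∃ v, w = v * cs.wordProd (alternatingWord i j k) ∧ cs.length w = cs.length v + k
  have suffix_one : IsSuffix 1 :=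
    ⟨w * cs.simple j, by simp [alternatingWord], (cs.isRightDescent_iff.1 hj).symm⟩
  have suffix_le {k : ℕ} : IsSuffix k → k ≤ cs.length w := fun ⟨v, _, hlen⟩ => by omega
  let k := Nat.findGreatest IsSuffix (cs.length w)
  have hk : 0 < k := Nat.le_findGreatest (suffix_le suffix_one) suffix_one
  have not_suffix_succ : ¬ IsSuffix (k + 1) := fun h =>
    Nat.findGreatest_is_greatest (Nat.lt_succ_self k) (suffix_le h) h
  obtain ⟨v, hw, hlen⟩ : IsSuffix k := Nat.findGreatest_spec (suffix_le suffix_one) suffix_one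
  have hv_next : ¬ cs.IsRightDescent v (if Even k then j else i) := fun hd => not_suffix_succ
    ⟨v * cs.simple (if Even k then j else i), by
      rw [CoxeterSystem.alternatingWord_succ', cs.wordProd_cons, ← mul_assoc,
        cs.simple_mul_simple_cancel_right, ← hw], by
      have := cs.isRightDescent_iff.1 hd
      omega⟩
  have hv_first : ¬ cs.IsRightDescent v (if Even k then i else j) := by
    obtain ⟨n, hn⟩ : ∃ n, k = n + 1 := Nat.exists_eq_succ_of_ne_zero hk.ne'
    have hparity : Even k ↔ ¬ Even n := by rw [hn, Nat.even_add_one]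
    simp only [hparity, ite_not]
    refine not_isRightDescent_of_length_mul_wordProd_cons (l := alternatingWord i j n) ?_
    rw [← CoxeterSystem.alternatingWord_succ', ← hn, ← hw, hlen, hn,
      CoxeterSystem.length_alternatingWord, add_assoc]
  refine ⟨v, k, hw, hk, ?_, hlen, ?_⟩
  · exact eq_zero_or_lt_of_length_mul_alternatingWord (hw ▸ hlen) (hw ▸ hi)
  · by_cases h : Even k <;> simp_all

end AlternatingWords

section GeometricRepresentation

open Module Polynomial.Chebyshev

open Classical in
/-- The `i`-th simple root, a standard basis vector of `B → ℝ`. -/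
noncomputable def simpleRoot (i : B) : B → ℝ := Pi.single i 1

theorem simpleRoot_self (i : B) : simpleRoot i i = 1 := by simp [simpleRoot]

theorem simpleRoot_of_ne {i j : B} (h : j ≠ i) : simpleRoot i j = 0 := by simp [simpleRoot, h]

theorem simpleRoot_nonneg (i : B) : 0 ≤ simpleRoot i := by
  classical exact Pi.single_nonneg.2 zero_le_one

theorem simpleRoot_ne_zero (i : B) : simpleRoot i ≠ 0 := fun h => by
  simpa [simpleRoot_self] using congrFun h i

theorem eq_smul_simpleRoot {i : B} {x : B → ℝ} (hx : ∀ b ≠ i, x b = 0) :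
    x = x i • simpleRoot i := by
  funext b
  rcases eq_or_ne b i with rfl | hb
  · simp [simpleRoot_self]
  · simp [hx b hb, simpleRoot_of_ne hb]

variable [Fintype B]

theorem sum_smul_simpleRoot (x : B → ℝ) : ∑ i, x i • simpleRoot i = x := by
  classical exact (pi_eq_sum_univ' x).symm

/-- The simple coroot `x ↦ 2 (x, e i)` of the Coxeter form `(e i, e j) = -cos (π / M i j)`. An
infinite bond is encoded by `M i j = 0`; the junk value `π / 0 = 0` then gives the customary
`(e i, e j) = -1`. -/
noncomputable def simpleCoroot (M : CoxeterMatrix B) (i : B) : Dual ℝ (B → ℝ) :=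
  ∑ j, (-2 * Real.cos (Real.pi / M i j)) • LinearMap.proj j

theorem simpleCoroot_simpleRoot (M : CoxeterMatrix B) (i j : B) :
    simpleCoroot M i (simpleRoot j) = -2 * Real.cos (Real.pi / M i j) := by
  classical simp [simpleCoroot, simpleRoot, Pi.single_apply]

theorem simpleCoroot_simpleRoot_self (M : CoxeterMatrix B) (i : B) :
    simpleCoroot M i (simpleRoot i) = 2 := by
  simp [simpleCoroot_simpleRoot]

theorem sin_pi_div_pos {m : ℕ} (hm : 2 ≤ m) : 0 < Real.sin (Real.pi / m) := by
  have hm' : (1 : ℝ) < m := by exact_mod_cast hm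
  exact Real.sin_pos_of_pos_of_lt_pi (by positivity) (div_lt_self Real.pi_pos hm')

theorem sin_two_pi_div_ne_zero {m : ℕ} (hm : 3 ≤ m) : Real.sin (2 * Real.pi / m) ≠ 0 := by
  have hm' : (2 : ℝ) < m := by exact_mod_cast hm
  refine (Real.sin_pos_of_pos_of_lt_pi (by positivity) ?_).ne'
  rw [div_lt_iff₀ (by positivity)]
  nlinarith [Real.pi_pos]

theorem S_eval_two_mul_cos_eq_zero {k : ℤ} {m : ℕ} (hm : 3 ≤ m) (hk : 2 * (k + 1) = m) :
    (S ℝ k).eval (2 * Real.cos (2 * Real.pi / m)) = 0 := by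
  have hk' : (2 : ℝ) * (k + 1) = m := by exact_mod_cast hk
  have hm0 : (m : ℝ) ≠ 0 := by positivity
  have hangle : (k + 1) * (2 * Real.pi / m) = Real.pi := by
    rw [mul_div_assoc', div_eq_iff hm0]
    linear_combination Real.pi * hk'
  refine (mul_eq_zero.1 ?_).resolve_right (sin_two_pi_div_ne_zero hm)
  rw [S_two_mul_real_cos, hangle, Real.sin_pi]

theorem S_eval_two_mul_cos_add_eq_zero {k : ℤ} {m : ℕ} (hm : 3 ≤ m) (hk : 2 * k + 1 = m) :
    (S ℝ k).eval (2 * Real.cos (2 * Real.pi / m)) +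
      (S ℝ (k - 1)).eval (2 * Real.cos (2 * Real.pi / m)) = 0 := by
  have hk' : (2 : ℝ) * k + 1 = m := by exact_mod_cast hk
  have hm0 : (m : ℝ) ≠ 0 := by positivity
  have hangle : (k + 1) * (2 * Real.pi / m) = 2 * Real.pi - k * (2 * Real.pi / m) := by
    rw [eq_sub_iff_add_eq, ← add_mul, mul_div_assoc', div_eq_iff hm0]
    linear_combination 2 * Real.pi * hk'
  refine (mul_eq_zero.1 ?_).resolve_right (sin_two_pi_div_ne_zero hm)
  rw [add_mul, S_two_mul_real_cos, S_two_mul_real_cos, hangle, Real.sin_two_pi_sub]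
  simp

theorem reflection_mul_reflection_pow_eq_one {V : Type*} [AddCommGroup V] [Module ℝ V] {x y : V}
    {f g : Dual ℝ V} (hf : f x = 2) (hg : g y = 2) {m : ℕ} (hm : 2 ≤ m)
    (hfy : f y = -2 * Real.cos (Real.pi / m)) (hgx : g x = -2 * Real.cos (Real.pi / m)) :
    (reflection hf * reflection hg) ^ m = 1 := by
  have ht : 2 * Real.cos (2 * Real.pi / m) = f y * g x - 2 := by
    rw [hfy, hgx, mul_div_assoc, Real.cos_two_mul]
    ring
  ext z
  rw [reflection_mul_reflection_pow_apply hf hg m z _ ht, LinearEquiv.coe_one, id]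
  obtain rfl | hm := hm.eq_or_lt
  · have hcos : Real.cos (Real.pi / (2 : ℕ)) = 0 := by simp
    rw [hcos, mul_zero] at hfy hgx
    simp only [hfy, hgx, zero_mul, zero_sub, Nat.cast_ofNat, Int.reduceSub, Int.reduceDiv,
      S_zero, S_one, S_neg_one, Polynomial.eval_one, Polynomial.eval_zero, Polynomial.eval_X,
      mul_div_cancel_left₀ Real.pi (two_ne_zero (α := ℝ)), Real.cos_pi]
    module
  obtain ⟨k, rfl | rfl⟩ := m.even_or_odd'
  · have hS := S_eval_two_mul_cos_eq_zero (k := k - 1) hm (by push_cast; ring)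
    rw [show ((2 * k : ℕ) - 2 : ℤ) / 2 = k - 1 by omega,
      show ((2 * k : ℕ) - 1 : ℤ) / 2 = k - 1 by omega, hS]
    simp
  · have hS := S_eval_two_mul_cos_add_eq_zero (k := k) hm (by push_cast; ring)
    rw [show ((2 * k + 1 : ℕ) - 1 : ℤ) / 2 = k by omega,
      show ((2 * k + 1 : ℕ) - 3 : ℤ) / 2 = k - 1 by omega,
      show ((2 * k + 1 : ℕ) - 2 : ℤ) / 2 = k - 1 by omega,
      show ((2 * k + 1 : ℕ) : ℤ) / 2 = k by omega, hS]
    simp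

theorem isLiftable_preReflection (M : CoxeterMatrix B) :
    M.IsLiftable fun i => preReflection (simpleRoot i) (simpleCoroot M i) := by
  let r (i : B) : (B → ℝ) ≃ₗ[ℝ] (B → ℝ) := reflection (simpleCoroot_simpleRoot_self M i)
  intro i j
  suffices h : (r i * r j) ^ M i j = 1 by
    have h' := congrArg LinearEquiv.automorphismGroup.toLinearMapMonoidHom h
    rwa [map_pow, map_mul, map_one] at h'
  rcases eq_or_ne i j with rfl | hij
  · have hr : r i * r i = 1 := LinearEquiv.ext (involutive_reflection _)
    rw [hr, one_pow]
  obtain hm | hm : M i j = 0 ∨ 2 ≤ M i j := by have := M.off_diagonal i j hij; omega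
  · rw [hm, pow_zero]
  · refine reflection_mul_reflection_pow_eq_one _ _ hm (simpleCoroot_simpleRoot M i j) ?_
    rw [simpleCoroot_simpleRoot, M.symmetric]

/-- The geometric representation of a Coxeter group. -/
noncomputable def geomRep (cs : CoxeterSystem M W) : Representation ℝ W (B → ℝ) :=
  cs.lift ⟨_, isLiftable_preReflection M⟩

variable (cs : CoxeterSystem M W)

theorem geomRep_simple_apply (i : B) (x : B → ℝ) :
    geomRep cs (cs.simple i) x = x - simpleCoroot M i x • simpleRoot i := by
  rw [geomRep, cs.lift_apply_simple, preReflection_apply]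

theorem geomRep_simple_apply_of_ne {j : B} (h : j ≠ i) (x : B → ℝ) :
    geomRep cs (cs.simple i) x j = x j := by
  simp [geomRep_simple_apply, simpleRoot_of_ne h]

theorem geomRep_simple_simpleRoot_self (i : B) :
    geomRep cs (cs.simple i) (simpleRoot i) = -simpleRoot i := by
  rw [geomRep_simple_apply, simpleCoroot_simpleRoot_self]
  module

open CoxeterSystem (alternatingWord)

theorem geomRep_alternatingWord_simpleRoot (i j : B) (k : ℕ) :
    geomRep cs (cs.wordProd (alternatingWord i j k)) (simpleRoot i) =
      (U ℝ k).eval (Real.cos (Real.pi / M i j)) • simpleRoot (if Even k then i else j) +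
      (U ℝ (k - 1)).eval (Real.cos (Real.pi / M i j)) • simpleRoot (if Even k then j else i) := by
  induction k with
  | zero => simp [alternatingWord]
  | succ k ih =>
    rw [CoxeterSystem.alternatingWord_succ', cs.wordProd_cons, map_mul, End.mul_apply, ih]
    by_cases hk : Even k <;>
    · simp only [hk, Nat.even_add_one, not_true_eq_false, not_false_eq_true, ↓reduceIte,
        Nat.cast_add, Nat.cast_one, add_sub_cancel_right, map_add, map_smul, geomRep_simple_apply,
        simpleCoroot_simpleRoot_self, simpleCoroot_simpleRoot, M.symmetric j i, U_add_one,
        Polynomial.eval_sub, Polynomial.eval_mul, Polynomial.eval_ofNat, Polynomial.eval_X]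
      module

theorem U_eval_cos_pi_div_nonneg {m k : ℕ} (hm : m ≠ 1) (hk : m = 0 ∨ k ≤ m) :
    0 ≤ (U ℝ (k - 1)).eval (Real.cos (Real.pi / m)) := by
  obtain rfl | hm : m = 0 ∨ 2 ≤ m := by omega
  · simp [U_eval_one]
  have hkm : (k : ℝ) ≤ m := by exact_mod_cast hk.resolve_left (by omega)
  have hm0 : (0 : ℝ) < m := by positivity
  refine nonneg_of_mul_nonneg_left ?_ (sin_pi_div_pos hm)
  rw [U_real_cos]
  have hle : (k : ℝ) * (Real.pi / m) ≤ m * (Real.pi / m) := by gcongr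
  refine Real.sin_nonneg_of_nonneg_of_le_pi ?_ ?_ <;> push_cast <;> rw [sub_add_cancel]
  · positivity
  · rwa [mul_div_cancel₀ _ hm0.ne'] at hle

theorem geomRep_simpleRoot_nonneg {w : W} {i : B} (h : ¬ cs.IsRightDescent w i) :
    0 ≤ geomRep cs w (simpleRoot i) := by
  induction hn : cs.length w using Nat.strong_induction_on generalizing w i with
  | _ n ih =>
  subst hn
  rcases eq_or_ne w 1 with rfl | hw
  · simpa using simpleRoot_nonneg i
  obtain ⟨j, hj⟩ := cs.exists_rightDescent_of_ne_one hw
  have hij : i ≠ j := by rintro rfl; exact h hj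
  obtain ⟨v, k, rfl, hk, hkM, hlen, hvi, hvj⟩ := exists_mul_alternatingWord hj h
  have hv (l : B) (hl : l = i ∨ l = j) : 0 ≤ geomRep cs v (simpleRoot l) :=
    ih _ (by omega) (by rcases hl with rfl | rfl <;> assumption) rfl
  have hU := U_eval_cos_pi_div_nonneg (k := k + 1) (M.off_diagonal i j hij) (by omega)
  have hU' := U_eval_cos_pi_div_nonneg (k := k) (M.off_diagonal i j hij) (by omega)
  rw [Nat.cast_add_one, add_sub_cancel_right] at hU
  rw [map_mul, End.mul_apply, geomRep_alternatingWord_simpleRoot, map_add, map_smul, map_smul]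
  exact add_nonneg (smul_nonneg hU (hv _ (by split <;> simp)))
    (smul_nonneg hU' (hv _ (by split <;> simp)))

end GeometricRepresentation

section MovedSpace

open Module

section Field

variable {k G V : Type*} [Field k] [Group G] [AddCommGroup V] [Module k V]
  (ρ : Representation k G V) {g h : G} {x : V}

/-- The moved space `im (ρ g - 1)` of a group element `g`. -/
def movedSpace (g : G) : Submodule k V := LinearMap.range (ρ g - 1)

/-- The fixed space `ker (ρ g - 1)` of a group element `g`. -/
def fixedSpace (g : G) : Submodule k V := LinearMap.ker (ρ g - 1)

variable {ρ}

theorem mem_movedSpace : x ∈ movedSpace ρ g ↔ ∃ y, ρ g y - y = x := Iff.rfl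

theorem mem_fixedSpace : x ∈ fixedSpace ρ g ↔ ρ g x = x := by
  rw [fixedSpace, LinearMap.mem_ker, LinearMap.sub_apply, sub_eq_zero, End.one_apply]

theorem movedSpace_one : movedSpace ρ 1 = ⊥ := by simp [movedSpace]

theorem movedSpace_mul_le (g h : G) :
    movedSpace ρ (g * h) ≤ movedSpace ρ g ⊔ movedSpace ρ h := by
  rintro _ ⟨y, rfl⟩
  refine Submodule.mem_sup.2 ⟨_, ⟨ρ h y, rfl⟩, _, ⟨y, rfl⟩, ?_⟩
  simp

theorem movedSpace_inv (g : G) : movedSpace ρ g⁻¹ = movedSpace ρ g := by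
  have inv_le (g : G) : movedSpace ρ g⁻¹ ≤ movedSpace ρ g := by
    rintro _ ⟨y, rfl⟩
    exact ⟨-ρ g⁻¹ y, by simp [sub_eq_add_neg, add_comm]⟩
  exact le_antisymm (inv_le g) (by simpa using inv_le g⁻¹)

theorem movedSpace_conj (g h : G) :
    movedSpace ρ (g * h * g⁻¹) = (movedSpace ρ h).comap (ρ g⁻¹) := by
  ext x
  constructor
  · rintro ⟨y, rfl⟩
    exact ⟨ρ g⁻¹ y, by simp⟩
  · rintro ⟨y, hy⟩
    refine ⟨ρ g y, ?_⟩
    rw [← ρ.self_inv_apply g x, ← hy]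
    simp

theorem sum_range_apply_pow_eq_zero (hx : x ∈ movedSpace ρ g) {n : ℕ} (hg : g ^ n = 1) :
    ∑ k ∈ Finset.range n, ρ (g ^ k) x = 0 := by
  obtain ⟨y, rfl⟩ := mem_movedSpace.1 hx
  have htele (k : ℕ) : ρ (g ^ k) (ρ g y - y) = ρ (g ^ (k + 1)) y - ρ (g ^ k) y := by
    rw [map_sub, pow_succ, map_mul ρ, End.mul_apply]
  simp only [htele, Finset.sum_range_sub (fun k => ρ (g ^ k) y), hg, pow_zero, sub_self]

theorem eq_zero_of_forall_apply_pow_nonneg [PartialOrder V] [IsOrderedAddMonoid V]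
    (hx : x ∈ movedSpace ρ g) (hg : IsOfFinOrder g) (hpos : ∀ n : ℕ, 0 ≤ ρ (g ^ n) x) : x = 0 := by
  have hsum := sum_range_apply_pow_eq_zero hx (pow_orderOf_eq_one g)
  rw [Finset.sum_eq_zero_iff_of_nonneg fun n _ => hpos n] at hsum
  simpa using hsum 0 (Finset.mem_range.2 hg.orderOf_pos)

theorem fixedSpace_mul_le_inf (hd : Disjoint (movedSpace ρ g) (movedSpace ρ h)) :
    fixedSpace ρ (g * h) ≤ fixedSpace ρ g ⊓ fixedSpace ρ h := by
  intro x hx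
  rw [mem_fixedSpace, map_mul, End.mul_apply] at hx
  have hmoved : ρ h x - x ∈ movedSpace ρ g := by
    rw [← movedSpace_inv]
    exact mem_movedSpace.2 ⟨x, by rw [(ρ.inv_apply_eq_iff).2 hx.symm]⟩
  have hfix : ρ h x = x := sub_eq_zero.1 (Submodule.disjoint_def.1 hd _ hmoved ⟨x, rfl⟩)
  rw [hfix] at hx
  exact ⟨mem_fixedSpace.2 hx, mem_fixedSpace.2 hfix⟩

variable [FiniteDimensional k V]

theorem finrank_movedSpace_add_finrank_fixedSpace (g : G) :
    finrank k (movedSpace ρ g) + finrank k (fixedSpace ρ g) = finrank k V :=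
  (ρ g - 1).finrank_range_add_finrank_ker

theorem finrank_movedSpace_mul_le (g h : G) : finrank k (movedSpace ρ (g * h)) ≤
    finrank k (movedSpace ρ g) + finrank k (movedSpace ρ h) :=
  (Submodule.finrank_mono (movedSpace_mul_le g h)).trans
    (Submodule.finrank_add_le_finrank_add_finrank _ _)

theorem movedSpace_mul_eq_sup (hgh : finrank k (movedSpace ρ (g * h)) =
    finrank k (movedSpace ρ g) + finrank k (movedSpace ρ h)) :
    movedSpace ρ (g * h) = movedSpace ρ g ⊔ movedSpace ρ h :=
  Submodule.eq_of_le_of_finrank_le (movedSpace_mul_le g h)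
    ((Submodule.finrank_add_le_finrank_add_finrank _ _).trans_eq hgh.symm)

end Field

section Real

variable {G ι : Type*} [Group G] [Finite G] [Fintype ι] {ρ : Representation ℝ G (ι → ℝ)}
  {g h t : G} {x y τ : ι → ℝ}

/-- The `G`-invariant inner product obtained by averaging the standard one. -/
noncomputable def invInner (ρ : Representation ℝ G (ι → ℝ)) : LinearMap.BilinForm ℝ (ι → ℝ) :=
  letI := Fintype.ofFinite G
  ∑ g, (dotProductBilin ℝ ℝ).compl₁₂ (ρ g) (ρ g)

theorem invInner_apply [Fintype G] (ρ : Representation ℝ G (ι → ℝ)) (x y : ι → ℝ) :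
    invInner ρ x y = ∑ g, ρ g x ⬝ᵥ ρ g y := by
  rw [invInner, Subsingleton.elim (Fintype.ofFinite G) ‹_›]
  simp only [LinearMap.sum_apply, LinearMap.compl₁₂_apply, dotProductBilin_apply_apply]

theorem invInner_comm (x y : ι → ℝ) : invInner ρ x y = invInner ρ y x := by
  have := Fintype.ofFinite G
  simp only [invInner_apply, dotProduct_comm]

theorem invInner_map (g : G) (x y : ι → ℝ) : invInner ρ (ρ g x) (ρ g y) = invInner ρ x y := by
  have := Fintype.ofFinite G
  simp only [invInner_apply, ← End.mul_apply, ← map_mul]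
  exact Fintype.sum_equiv (Equiv.mulRight g) _ _ fun _ => rfl

theorem invInner_map_left (g : G) (x y : ι → ℝ) :
    invInner ρ (ρ g x) y = invInner ρ x (ρ g⁻¹ y) := by
  rw [← invInner_map g⁻¹, ρ.inv_self_apply]

theorem invInner_self_pos (hx : x ≠ 0) : 0 < invInner ρ x x := by
  have := Fintype.ofFinite G
  have dotProduct_self_nonneg (y : ι → ℝ) : 0 ≤ y ⬝ᵥ y := by
    simpa using dotProduct_star_self_nonneg y
  rw [invInner_apply]
  refine Finset.sum_pos' (fun _ _ => dotProduct_self_nonneg _) ⟨1, Finset.mem_univ _, ?_⟩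
  rw [map_one, End.one_apply]
  exact (dotProduct_self_nonneg x).lt_of_ne' (dotProduct_self_eq_zero.not.2 hx)

theorem eq_zero_of_invInner_self_nonpos (hx : invInner ρ x x ≤ 0) : x = 0 :=
  not_not.1 fun h => hx.not_gt (invInner_self_pos h)

theorem invInner_eq_zero_of_mem (hx : x ∈ fixedSpace ρ g) (hy : y ∈ movedSpace ρ g) :
    invInner ρ x y = 0 := by
  obtain ⟨z, rfl⟩ := mem_movedSpace.1 hy
  rw [map_sub, sub_eq_zero, ← invInner_map g x z, mem_fixedSpace.1 hx]

omit [Fintype ι] in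
theorem isCompl_fixedSpace_movedSpace [Finite ι] (g : G) :
    IsCompl (fixedSpace ρ g) (movedSpace ρ g) := by
  have := Fintype.ofFinite ι
  refine (Submodule.isCompl_iff_disjoint _ _ ?_).2 (Submodule.disjoint_def.2 fun x hf hm => ?_)
  · rw [add_comm, finrank_movedSpace_add_finrank_fixedSpace]
  · exact eq_zero_of_invInner_self_nonpos (invInner_eq_zero_of_mem hf hm).le

theorem mem_movedSpace_of_forall_invInner_eq_zero
    (hx : ∀ y ∈ fixedSpace ρ g, invInner ρ y x = 0) : x ∈ movedSpace ρ g := by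
  obtain ⟨y, hy, z, hz, rfl⟩ :=
    Submodule.mem_sup.1 ((isCompl_fixedSpace_movedSpace (ρ := ρ) g).sup_eq_top ▸
      Submodule.mem_top (x := x))
  have h := hx y hy
  rw [map_add, invInner_eq_zero_of_mem hy hz, add_zero] at h
  rwa [eq_zero_of_invInner_self_nonpos h.le, zero_add]

omit [Fintype ι] in
theorem finrank_movedSpace_mul_of_disjoint [Finite ι]
    (hd : Disjoint (movedSpace ρ g) (movedSpace ρ h)) :
    finrank ℝ (movedSpace ρ (g * h)) =
      finrank ℝ (movedSpace ρ g) + finrank ℝ (movedSpace ρ h) := by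
  have := Fintype.ofFinite ι
  refine (finrank_movedSpace_mul_le g h).antisymm ?_
  have hdisj : Disjoint (fixedSpace ρ (g * h)) (movedSpace ρ g ⊔ movedSpace ρ h) := by
    refine Submodule.disjoint_def.2 fun x hx hm => eq_zero_of_invInner_self_nonpos (ρ := ρ) ?_
    obtain ⟨a, ha, b, hb, hab⟩ := Submodule.mem_sup.1 hm
    obtain ⟨hg, hh⟩ := fixedSpace_mul_le_inf hd hx
    have hsum : invInner ρ x (a + b) = 0 := by
      rw [map_add, invInner_eq_zero_of_mem hg ha, invInner_eq_zero_of_mem hh hb, add_zero]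
    exact (hab ▸ hsum).le
  have h₁ := Submodule.finrank_add_finrank_le_of_disjoint hdisj
  have h₂ := Submodule.finrank_sup_add_finrank_inf_eq (movedSpace ρ g) (movedSpace ρ h)
  rw [hd.eq_bot, finrank_bot] at h₂
  have h₃ := finrank_movedSpace_add_finrank_fixedSpace (ρ := ρ) (g * h)
  omega

/-- `t` acts as the orthogonal reflection that negates `τ`. -/
def ReflectsIn (ρ : Representation ℝ G (ι → ℝ)) (t : G) (τ : ι → ℝ) : Prop :=
  ∀ x, ρ t x = x - (2 * invInner ρ x τ / invInner ρ τ τ) • τ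

theorem ReflectsIn.conj (ht : ReflectsIn ρ t τ) (g : G) :
    ReflectsIn ρ (g * t * g⁻¹) (ρ g τ) := by
  intro x
  rw [invInner_map, ← invInner_map g⁻¹ x, ρ.inv_self_apply, map_mul, map_mul, End.mul_apply,
    End.mul_apply, ht, map_sub, map_smul, ρ.self_inv_apply]

theorem ReflectsIn.movedSpace_eq (ht : ReflectsIn ρ t τ) (hτ : τ ≠ 0) :
    movedSpace ρ t = ℝ ∙ τ := by
  refine le_antisymm ?_ ((Submodule.span_singleton_le_iff_mem _ _).2 ?_)
  · rintro _ ⟨y, rfl⟩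
    rw [LinearMap.sub_apply, End.one_apply, ht, sub_sub_cancel_left]
    exact neg_mem (Submodule.smul_mem _ _ (Submodule.mem_span_singleton_self τ))
  · refine mem_movedSpace.2 ⟨(-1 / 2 : ℝ) • τ, ?_⟩
    have hττ := (invInner_self_pos (ρ := ρ) hτ).ne'
    have hcoeff : 2 * ((-1 / 2 : ℝ) * invInner ρ τ τ) / invInner ρ τ τ = -1 := by field_simp
    rw [ht, map_smul, LinearMap.smul_apply, smul_eq_mul, hcoeff]
    module

theorem ReflectsIn.finrank_movedSpace (ht : ReflectsIn ρ t τ) (hτ : τ ≠ 0) :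
    finrank ℝ (movedSpace ρ t) = 1 := by
  rw [ht.movedSpace_eq hτ, finrank_span_singleton hτ]

theorem ReflectsIn.fixedSpace_lt (ht : ReflectsIn ρ t τ) (hτ : τ ≠ 0)
    (hg : τ ∈ movedSpace ρ g) : fixedSpace ρ g < fixedSpace ρ (t * g) := by
  obtain ⟨y, hy⟩ := mem_movedSpace.1 hg
  have hgy : ρ g y = y + τ := by rw [← hy, add_sub_cancel]
  refine SetLike.lt_iff_le_and_exists.2 ⟨fun z hz => ?_, y, ?_, fun hfix => hτ ?_⟩
  · rw [mem_fixedSpace, map_mul, End.mul_apply, mem_fixedSpace.1 hz, ht,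
      invInner_eq_zero_of_mem hz hg]
    simp
  · -- `y` and `g y = y + τ` have the same length, so `t` swaps them
    have hlen := invInner_map (ρ := ρ) g y y
    rw [hgy, map_add, map_add, LinearMap.add_apply, LinearMap.add_apply,
      invInner_comm τ y] at hlen
    have hττ := invInner_self_pos (ρ := ρ) hτ
    have hcoeff : 2 * invInner ρ (y + τ) τ / invInner ρ τ τ = 1 := by
      rw [map_add, LinearMap.add_apply, div_eq_one_iff_eq hττ.ne']
      linarith
    rw [mem_fixedSpace, map_mul, End.mul_apply, hgy, ht, hcoeff, one_smul, add_sub_cancel_right]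
  · rw [← hy, mem_fixedSpace.1 hfix, sub_self]

theorem ReflectsIn.finrank_movedSpace_mul_add_one (ht : ReflectsIn ρ t τ) (hτ : τ ≠ 0)
    (hg : τ ∈ movedSpace ρ g) :
    finrank ℝ (movedSpace ρ (t * g)) + 1 = finrank ℝ (movedSpace ρ g) := by
  have hfix := Submodule.finrank_lt_finrank_of_lt (ht.fixedSpace_lt hτ hg)
  have h₁ := finrank_movedSpace_add_finrank_fixedSpace (ρ := ρ) g
  have h₂ := finrank_movedSpace_add_finrank_fixedSpace (ρ := ρ) (t * g)
  have h₃ := finrank_movedSpace_mul_le (ρ := ρ) t⁻¹ (t * g)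
  rw [inv_mul_cancel_left, movedSpace_inv, ht.finrank_movedSpace hτ] at h₃
  omega

end Real

end MovedSpace

/-! ### Roots -/

section Roots

open Module

variable [Fintype B]

/-- A root: an image of a simple root under `W`. -/
def IsRoot (cs : CoxeterSystem M W) (τ : B → ℝ) : Prop :=
  ∃ w i, τ = geomRep cs w (simpleRoot i)

/-- A positive root: a root with nonnegative coordinates in the basis of simple roots. -/
def IsPosRoot (cs : CoxeterSystem M W) (τ : B → ℝ) : Prop :=
  IsRoot cs τ ∧ 0 ≤ τ

/-- The positive roots contained in the subspace `U`. -/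
def posRootsIn (cs : CoxeterSystem M W) (U : Submodule ℝ (B → ℝ)) : Set (B → ℝ) :=
  {τ | IsPosRoot cs τ ∧ τ ∈ U}

/-- `t` is the reflection in the root `τ`. -/
def IsRootReflection (cs : CoxeterSystem M W) (t : W) (τ : B → ℝ) : Prop :=
  ∃ w i, t = w * cs.simple i * w⁻¹ ∧ τ = geomRep cs w (simpleRoot i)

variable {cs : CoxeterSystem M W} {t u v w : W} {i : B} {τ x : B → ℝ}

local notation "mov" => movedSpace (geomRep cs)
local notation "ip" => invInner (geomRep cs)

theorem IsRoot.map (h : IsRoot cs τ) (g : W) : IsRoot cs (geomRep cs g τ) := by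
  obtain ⟨w, i, rfl⟩ := h
  exact ⟨g * w, i, by rw [map_mul, End.mul_apply]⟩

theorem IsRoot.ne_zero (h : IsRoot cs τ) : τ ≠ 0 := by
  obtain ⟨w, i, rfl⟩ := h
  exact (map_ne_zero_iff _ ((geomRep cs).apply_bijective w).1).2 (simpleRoot_ne_zero i)

theorem isRoot_simpleRoot (cs : CoxeterSystem M W) (i : B) : IsRoot cs (simpleRoot i) :=
  ⟨1, i, by simp⟩

theorem isPosRoot_simpleRoot (cs : CoxeterSystem M W) (i : B) : IsPosRoot cs (simpleRoot i) :=
  ⟨isRoot_simpleRoot cs i, simpleRoot_nonneg i⟩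

theorem geomRep_mul_simple_simpleRoot (w : W) (i : B) :
    geomRep cs (w * cs.simple i) (simpleRoot i) = -geomRep cs w (simpleRoot i) := by
  rw [map_mul, End.mul_apply, geomRep_simple_simpleRoot_self, map_neg]

theorem IsRoot.neg (h : IsRoot cs τ) : IsRoot cs (-τ) := by
  obtain ⟨w, i, rfl⟩ := h
  exact ⟨w * cs.simple i, i, (geomRep_mul_simple_simpleRoot w i).symm⟩

theorem geomRep_simpleRoot_nonpos (h : cs.IsRightDescent w i) :
    geomRep cs w (simpleRoot i) ≤ 0 := by
  rw [← neg_nonneg, ← geomRep_mul_simple_simpleRoot]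
  exact geomRep_simpleRoot_nonneg cs (cs.isRightDescent_iff_not_isRightDescent_mul.1 h)

theorem IsRoot.isPosRoot_or_neg (h : IsRoot cs τ) : IsPosRoot cs τ ∨ IsPosRoot cs (-τ) := by
  have h' := h
  obtain ⟨w, i, rfl⟩ := h'
  by_cases hd : cs.IsRightDescent w i
  · exact Or.inr ⟨h.neg, neg_nonneg.2 (geomRep_simpleRoot_nonpos hd)⟩
  · exact Or.inl ⟨h, geomRep_simpleRoot_nonneg cs hd⟩

theorem IsPosRoot.sum_pos (h : IsPosRoot cs τ) : 0 < ∑ b, τ b :=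
  Fintype.sum_pos (h.2.lt_of_ne' h.1.ne_zero)

theorem IsPosRoot.simple_apply (h : IsPosRoot cs τ) (i : B) :
    IsPosRoot cs (geomRep cs (cs.simple i) τ) ∨ ∃ a : ℝ, 0 < a ∧ τ = a • simpleRoot i := by
  refine (h.1.map (cs.simple i)).isPosRoot_or_neg.imp_right fun hneg => ?_
  have hvanish (b : B) (hb : b ≠ i) : τ b = 0 := by
    have hb' := hneg.2 b
    rw [Pi.neg_apply, geomRep_simple_apply_of_ne cs hb, Pi.zero_apply, neg_nonneg] at hb'
    exact hb'.antisymm (h.2 b)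
  have hτ := eq_smul_simpleRoot hvanish
  refine ⟨τ i, (h.2 i).lt_of_ne' fun h0 => h.1.ne_zero ?_, hτ⟩
  rw [hτ, h0, Pi.zero_apply, zero_smul]

theorem IsRoot.exists_isRootReflection (h : IsRoot cs τ) : ∃ t, IsRootReflection cs t τ := by
  obtain ⟨w, i, rfl⟩ := h
  exact ⟨_, w, i, rfl, rfl⟩

theorem exists_isRootReflection_of_isReflection (h : cs.IsReflection t) :
    ∃ τ, IsRootReflection cs t τ := by
  obtain ⟨w, i, rfl⟩ := h
  exact ⟨_, w, i, rfl, rfl⟩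

theorem IsRootReflection.isReflection (h : IsRootReflection cs t τ) : cs.IsReflection t := by
  obtain ⟨w, i, rfl, -⟩ := h
  exact ⟨w, i, rfl⟩

theorem IsRootReflection.isRoot (h : IsRootReflection cs t τ) : IsRoot cs τ := by
  obtain ⟨w, i, -, rfl⟩ := h
  exact ⟨w, i, rfl⟩

theorem isRootReflection_simple (cs : CoxeterSystem M W) (i : B) :
    IsRootReflection cs (cs.simple i) (simpleRoot i) :=
  ⟨1, i, by simp⟩

variable [Finite W]

theorem finite_setOf_isRoot (cs : CoxeterSystem M W) : {τ | IsRoot cs τ}.Finite :=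
  (Set.finite_range fun p : W × B => geomRep cs p.1 (simpleRoot p.2)).subset
    fun _ ⟨w, i, h⟩ => ⟨(w, i), h.symm⟩

variable (cs) in
theorem reflectsIn_simple (i : B) :
    ReflectsIn (geomRep cs) (cs.simple i) (simpleRoot i) := by
  intro x
  have hinv := invInner_map (ρ := geomRep cs) (cs.simple i) x (simpleRoot i)
  rw [geomRep_simple_simpleRoot_self, geomRep_simple_apply, map_neg, map_sub,
    LinearMap.sub_apply, map_smul, LinearMap.smul_apply, smul_eq_mul] at hinv
  have hcoroot :
      2 * ip x (simpleRoot i) / ip (simpleRoot i) (simpleRoot i) = simpleCoroot M i x := by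
    rw [div_eq_iff (invInner_self_pos (simpleRoot_ne_zero i)).ne']
    linarith
  rw [geomRep_simple_apply, hcoroot]

theorem IsRootReflection.reflectsIn (h : IsRootReflection cs t τ) :
    ReflectsIn (geomRep cs) t τ := by
  obtain ⟨w, i, rfl, rfl⟩ := h
  exact (reflectsIn_simple cs i).conj w

theorem IsRootReflection.movedSpace_eq (h : IsRootReflection cs t τ) : mov t = ℝ ∙ τ :=
  h.reflectsIn.movedSpace_eq h.isRoot.ne_zero

theorem exists_mem_fixedSpace_forall_isRoot
    (hw : ∀ τ, IsRoot cs τ → τ ∉ mov w) :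
    ∃ x ∈ fixedSpace (geomRep cs) w, ∀ τ, IsRoot cs τ → ip τ x ≠ 0 := by
  have := (finite_setOf_isRoot cs).to_subtype
  obtain ⟨x, hx, hreg⟩ := Dual.exists_forall_mem_ne_zero_of_forall_exists
    (fixedSpace (geomRep cs) w) (fun τ : {τ | IsRoot cs τ} => ip τ.1) fun τ => by
      by_contra! h
      refine hw τ.1 τ.2 (mem_movedSpace_of_forall_invInner_eq_zero fun y hy => ?_)
      rw [invInner_comm]
      exact h y hy
  exact ⟨x, hx, fun τ hτ => hreg ⟨τ, hτ⟩⟩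

theorem exists_forall_pos_invInner_simpleRoot (hx : ∀ τ, IsRoot cs τ → ip τ x ≠ 0) :
    ∃ g, ∀ i, 0 < ip (simpleRoot i) (geomRep cs g x) := by
  obtain ⟨g, hg⟩ := Finite.exists_max fun g => ∑ b, geomRep cs g x b
  refine ⟨g, fun i => lt_of_not_ge fun hneg => ?_⟩
  replace hneg : ip (simpleRoot i) (geomRep cs g x) < 0 := hneg.lt_of_ne <| by
    rw [invInner_comm, invInner_map_left, invInner_comm]
    exact hx _ ((isRoot_simpleRoot cs i).map _)
  have hmax := hg (cs.simple i * g)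
  rw [map_mul, End.mul_apply, reflectsIn_simple cs i] at hmax
  simp only [Pi.sub_apply, Pi.smul_apply, smul_eq_mul, Finset.sum_sub_distrib,
    ← Finset.mul_sum] at hmax
  have hcoeff : 2 * ip (geomRep cs g x) (simpleRoot i) / ip (simpleRoot i) (simpleRoot i) < 0 := by
    rw [invInner_comm]
    exact div_neg_of_neg_of_pos (by linarith) (invInner_self_pos (simpleRoot_ne_zero i))
  have := mul_neg_of_neg_of_pos hcoeff (isPosRoot_simpleRoot cs i).sum_pos
  linarith

theorem eq_one_of_forall_pos_invInner_simpleRoot (hpos : ∀ i, 0 < ip (simpleRoot i) x)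
    (hw : geomRep cs w x = x) : w = 1 := by
  by_contra hne
  obtain ⟨i, hi⟩ := cs.exists_rightDescent_of_ne_one hne
  have hinv : ip (geomRep cs w (simpleRoot i)) x = ip (simpleRoot i) x := by
    conv_lhs => rw [← hw, invInner_map]
  rw [← sum_smul_simpleRoot (geomRep cs w (simpleRoot i)), map_sum, LinearMap.sum_apply] at hinv
  refine (hpos i).not_ge (hinv.symm.trans_le (Finset.sum_nonpos fun b _ => ?_))
  rw [map_smul, LinearMap.smul_apply, smul_eq_mul]
  exact mul_nonpos_of_nonpos_of_nonneg (geomRep_simpleRoot_nonpos hi b) (hpos b).le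

theorem exists_isRoot_mem_movedSpace (hw : w ≠ 1) : ∃ τ, IsRoot cs τ ∧ τ ∈ mov w := by
  by_contra! hroot
  obtain ⟨x, hx, hreg⟩ := exists_mem_fixedSpace_forall_isRoot hroot
  obtain ⟨g, hg⟩ := exists_forall_pos_invInner_simpleRoot hreg
  refine hw (conj_eq_one_iff.1 (eq_one_of_forall_pos_invInner_simpleRoot (w := g * w * g⁻¹) hg ?_))
  simp only [map_mul, End.mul_apply, Representation.inv_self_apply, mem_fixedSpace.1 hx]

end Roots

/-! ### Carter's lemma -/

section CarterLemma

open Module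

variable [Fintype B] [Finite W] {cs : CoxeterSystem M W} {t u v w : W} {i : B} {τ x : B → ℝ}

local notation "mov" => movedSpace (geomRep cs)

theorem rlen_le_finrank_movedSpace (w : W) : rlen cs w ≤ finrank ℝ (mov w) := by
  induction hn : finrank ℝ (mov w) using Nat.strong_induction_on generalizing w with
  | _ n ih =>
  rcases eq_or_ne w 1 with rfl | hw
  · rw [rlen_one]
    exact Nat.zero_le _
  obtain ⟨τ, hτ, hm⟩ := exists_isRoot_mem_movedSpace (cs := cs) hw
  obtain ⟨t, ht⟩ := hτ.exists_isRootReflection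
  have hrank := ht.reflectsIn.finrank_movedSpace_mul_add_one hτ.ne_zero hm
  have hrec := ih _ (by omega) (t * w) rfl
  have hmul := rlen_mul_le (cs := cs) t (t * w)
  rw [← mul_assoc, ht.isReflection.mul_self, one_mul] at hmul
  have hrlen : rlen cs t ≤ 1 := by
    simpa using rlen_prod_le_length (cs := cs) (l := [t]) (by simpa using ht.isReflection)
  omega

theorem finrank_movedSpace_prod_le_length {l : List W} (hl : ∀ t ∈ l, cs.IsReflection t) :
    finrank ℝ (mov l.prod) ≤ l.length := by
  induction l with
  | nil =>
    rw [List.prod_nil, movedSpace_one, finrank_bot]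
    exact Nat.zero_le _
  | cons t l ih =>
    rw [List.forall_mem_cons] at hl
    obtain ⟨τ, ht⟩ := exists_isRootReflection_of_isReflection hl.1
    have hmul := finrank_movedSpace_mul_le (ρ := geomRep cs) t l.prod
    rw [ht.reflectsIn.finrank_movedSpace ht.isRoot.ne_zero] at hmul
    rw [List.prod_cons, List.length_cons]
    have := ih hl.2
    omega

theorem rlen_eq_finrank_movedSpace (w : W) : rlen cs w = finrank ℝ (mov w) := by
  refine (rlen_le_finrank_movedSpace w).antisymm ?_
  obtain ⟨l, hl, hlen, rfl⟩ := exists_reflection_word cs w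
  exact (finrank_movedSpace_prod_le_length hl).trans_eq hlen

theorem rlen_mul_eq_of_disjoint (h : Disjoint (mov u) (mov v)) :
    rlen cs (u * v) = rlen cs u + rlen cs v := by
  simp only [rlen_eq_finrank_movedSpace]
  exact finrank_movedSpace_mul_of_disjoint h

theorem rle.movedSpace_eq_sup (h : rle cs u w) : mov w = mov u ⊔ mov (u⁻¹ * w) := by
  rw [rle, ← mul_inv_cancel_left u w, inv_mul_cancel_left] at h
  simp only [rlen_eq_finrank_movedSpace] at h
  conv_lhs => rw [← mul_inv_cancel_left u w]
  exact movedSpace_mul_eq_sup h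

theorem rle.movedSpace_le (h : rle cs u w) : mov u ≤ mov w :=
  le_sup_left.trans_eq h.movedSpace_eq_sup.symm

theorem IsRootReflection.rlen_eq_one (h : IsRootReflection cs t τ) : rlen cs t = 1 := by
  rw [rlen_eq_finrank_movedSpace, h.reflectsIn.finrank_movedSpace h.isRoot.ne_zero]

theorem IsRootReflection.rle_iff (h : IsRootReflection cs t τ) : rle cs t w ↔ τ ∈ mov w := by
  refine ⟨fun htw => htw.movedSpace_le ?_, fun hτ => ?_⟩
  · rw [h.movedSpace_eq]
    exact Submodule.mem_span_singleton_self τ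
  · rw [rle, h.rlen_eq_one, h.isReflection.inv, rlen_eq_finrank_movedSpace,
      rlen_eq_finrank_movedSpace, add_comm]
    exact (h.reflectsIn.finrank_movedSpace_mul_add_one h.isRoot.ne_zero hτ).symm

theorem IsRootReflection.notMem_movedSpace (h : IsRootReflection cs t τ) (hτ : τ ∈ mov w) :
    τ ∉ mov (t⁻¹ * w) := by
  intro hτ'
  rw [← h.rle_iff] at hτ hτ'
  unfold rle at hτ hτ'
  rw [h.isReflection.inv, ← mul_assoc, h.isReflection.mul_self, one_mul] at hτ'
  rw [h.isReflection.inv] at hτ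
  have := h.rlen_eq_one
  omega

theorem IsRootReflection.movedSpace_inv_mul (h : IsRootReflection cs t τ) (hτ : τ ∈ mov v)
    (hvw : rle cs v w) : mov (t⁻¹ * v) = mov v ⊓ mov (t⁻¹ * w) := by
  have htv := h.rle_iff.2 hτ
  refine Submodule.eq_of_le_of_finrank_le
    (le_inf htv.inv_mul_rle.movedSpace_le (htv.inv_mul_rle_inv_mul hvw).movedSpace_le) ?_
  have hlt : mov v ⊓ mov (t⁻¹ * w) < mov v :=
    inf_lt_left.2 fun hle => h.notMem_movedSpace (hvw.movedSpace_le hτ) (hle hτ)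
  have hrank := Submodule.finrank_lt_finrank_of_lt hlt
  have := h.rlen_eq_one
  rw [rle] at htv
  simp only [rlen_eq_finrank_movedSpace] at *
  omega

theorem rle_of_movedSpace_le (hu : rle cs u w) (hv : rle cs v w) (h : mov u ≤ mov v) :
    rle cs u v := by
  induction hn : rlen cs u using Nat.strong_induction_on generalizing u v w with
  | _ n ih =>
  rcases eq_or_ne u 1 with rfl | hne
  · exact one_rle v
  obtain ⟨τ, hτ, hm⟩ := exists_isRoot_mem_movedSpace (cs := cs) hne
  obtain ⟨t, ht⟩ := hτ.exists_isRootReflection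
  have htu := ht.rle_iff.2 hm
  have htv := ht.rle_iff.2 (h hm)
  have hlt : rlen cs (t⁻¹ * u) < n := by
    have := ht.rlen_eq_one
    unfold rle at htu
    omega
  refine htv.of_inv_mul_rle_inv_mul
    (ih _ hlt (htu.inv_mul_rle_inv_mul hu) (htv.inv_mul_rle_inv_mul hv) ?_ rfl)
  rw [ht.movedSpace_inv_mul hm hu, ht.movedSpace_inv_mul (h hm) hv]
  exact inf_le_inf_right _ h

theorem movedSpace_le_span_posRootsIn (w : W) :
    mov w ≤ Submodule.span ℝ (posRootsIn cs (mov w)) := by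
  induction hn : rlen cs w using Nat.strong_induction_on generalizing w with
  | _ n ih =>
  rcases eq_or_ne w 1 with rfl | hw
  · simp [movedSpace_one]
  obtain ⟨τ, hτ, hm⟩ := exists_isRoot_mem_movedSpace (cs := cs) hw
  obtain ⟨t, ht⟩ := hτ.exists_isRootReflection
  have htw := ht.rle_iff.2 hm
  have hlt : rlen cs (t⁻¹ * w) < n := by
    have := ht.rlen_eq_one
    unfold rle at htw
    omega
  conv_lhs => rw [htw.movedSpace_eq_sup, ht.movedSpace_eq]
  refine sup_le ((Submodule.span_singleton_le_iff_mem _ _).2 ?_)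
    ((ih _ hlt _ rfl).trans (Submodule.span_mono fun σ hσ =>
      ⟨hσ.1, htw.inv_mul_rle.movedSpace_le hσ.2⟩))
  rcases hτ.isPosRoot_or_neg with hpos | hneg
  · exact Submodule.subset_span ⟨hpos, hm⟩
  · exact neg_mem_iff.1 (Submodule.subset_span ⟨hneg, neg_mem hm⟩)

section WordProd

variable {l : List B}

theorem movedSpace_simple (i : B) : mov (cs.simple i) = ℝ ∙ simpleRoot i :=
  (isRootReflection_simple cs i).movedSpace_eq

theorem apply_eq_zero_of_mem_movedSpace_wordProd (hx : x ∈ mov (cs.wordProd l)) (hi : i ∉ l) :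
    x i = 0 := by
  induction l generalizing x with
  | nil => simp_all [movedSpace_one]
  | cons j l ih =>
    rw [List.mem_cons, not_or] at hi
    rw [cs.wordProd_cons] at hx
    obtain ⟨y, hy, z, hz, rfl⟩ := Submodule.mem_sup.1 (movedSpace_mul_le _ _ hx)
    rw [movedSpace_simple] at hy
    obtain ⟨c, rfl⟩ := Submodule.mem_span_singleton.1 hy
    simp [ih hz hi.2, simpleRoot_of_ne hi.1]

theorem simpleRoot_notMem_movedSpace_wordProd (hi : i ∉ l) :
    simpleRoot i ∉ mov (cs.wordProd l) := fun h => by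
  simpa [simpleRoot_self] using apply_eq_zero_of_mem_movedSpace_wordProd h hi

omit [Fintype B] in
theorem rlen_simple_mul_wordProd [Finite B] (hi : i ∉ l) :
    rlen cs (cs.simple i * cs.wordProd l) = rlen cs (cs.simple i) + rlen cs (cs.wordProd l) := by
  have := Fintype.ofFinite B
  apply rlen_mul_eq_of_disjoint
  rw [movedSpace_simple, disjoint_comm, Submodule.disjoint_span_singleton' (simpleRoot_ne_zero i)]
  exact simpleRoot_notMem_movedSpace_wordProd hi

theorem mem_movedSpace_wordProd_iff (hl : l.Nodup) :
    x ∈ mov (cs.wordProd l) ↔ ∀ i ∉ l, x i = 0 := by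
  refine ⟨fun hx i hi => apply_eq_zero_of_mem_movedSpace_wordProd hx hi, fun hx => ?_⟩
  have simpleRoot_mem {i : B} (hi : i ∈ l) : simpleRoot i ∈ mov (cs.wordProd l) := by
    clear hx
    induction l with
    | nil => simp at hi
    | cons j l ih =>
      obtain ⟨hj, hl⟩ := List.nodup_cons.1 hl
      have hle := rle_mul_right_iff.2 (rlen_simple_mul_wordProd (cs := cs) hj)
      rw [cs.wordProd_cons, hle.movedSpace_eq_sup, inv_mul_cancel_left]
      rcases List.mem_cons.1 hi with rfl | hi
      · rw [movedSpace_simple]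
        exact Submodule.mem_sup_left (Submodule.mem_span_singleton_self _)
      · exact Submodule.mem_sup_right (ih hl hi)
  rw [← sum_smul_simpleRoot x]
  refine Submodule.sum_mem _ fun i _ => ?_
  by_cases hi : i ∈ l
  · exact Submodule.smul_mem _ _ (simpleRoot_mem hi)
  · rw [hx i hi, zero_smul]
    exact Submodule.zero_mem _

end WordProd

end CarterLemma

/-! ### Polyhedral cones -/

section Cones

open PointedCone (hull subset_hull)

variable {k V : Type*} [Field k] [LinearOrder k] [IsStrictOrderedRing k] [AddCommGroup V]
  [Module k V] {s t u Δ R : Set V} {x y z β : V}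

theorem subsingleton_setOf_add_nsmul_mem {U : Submodule k V} (hz : z ∉ U) (x : V) :
    {n : ℕ | x + n • z ∈ U}.Subsingleton := by
  intro n hn m hm
  by_contra hne
  refine hz ((U.smul_mem_iff (sub_ne_zero.2 (Nat.cast_injective.ne hne : (n : k) ≠ m))).1 ?_)
  rw [sub_smul, Nat.cast_smul_eq_nsmul, Nat.cast_smul_eq_nsmul, ← add_sub_add_left_eq_sub]
  exact U.sub_mem hn hm

theorem exists_mem_hull_forall_mem_imp_subset {ι : Type*} [Finite ι] (U : ι → Submodule k V)
    (hR : R.Finite) : ∃ x ∈ hull k R, ∀ i, x ∈ U i → R ⊆ U i := by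
  induction R, hR using Set.Finite.induction_on with
  | empty => exact ⟨0, zero_mem _, fun i _ => Set.empty_subset _⟩
  | @insert z R _ _ ih =>
    obtain ⟨x, hx, hgen⟩ := ih
    have hfin : (⋃ i ∈ {i | z ∉ U i}, {n : ℕ | x + n • z ∈ U i}).Finite :=
      (Set.toFinite _).biUnion fun i hi => (subsingleton_setOf_add_nsmul_mem hi x).finite
    obtain ⟨n, hn⟩ := hfin.exists_notMem
    refine ⟨x + n • z, add_mem (Submodule.span_mono (Set.subset_insert z R) hx)
      (nsmul_mem (subset_hull (Set.mem_insert z R)) n), fun i hi => ?_⟩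
    have hz : z ∈ U i := by
      by_contra hz
      exact hn (Set.mem_biUnion (show i ∈ {i | z ∉ U i} from hz) hi)
    exact Set.insert_subset hz (hgen i ((add_mem_cancel_right (nsmul_mem hz n)).1 hi))

theorem apply_nonneg_of_mem_hull {f : V →ₗ[k] k} (hf : ∀ y ∈ s, 0 ≤ f y) (hx : x ∈ hull k s) :
    0 ≤ f x :=
  Submodule.span_le (p := (PointedCone.positive k k).comap f).2 hf hx

theorem mem_hull_setOf_eq_zero {f : V →ₗ[k] k} (hf : ∀ y ∈ s, 0 ≤ f y) (hx : x ∈ hull k s)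
    (hfx : f x = 0) : x ∈ hull k {y ∈ s | f y = 0} := by
  induction hx using Submodule.span_induction with
  | mem x hx => exact subset_hull ⟨hx, hfx⟩
  | zero => exact zero_mem _
  | add x y hx hy ihx ihy =>
    rw [map_add, add_eq_zero_iff_of_nonneg (apply_nonneg_of_mem_hull hf hx)
      (apply_nonneg_of_mem_hull hf hy)] at hfx
    exact add_mem (ihx hfx.1) (ihy hfx.2)
  | smul a x _ ih =>
    rw [Nonneg.mk_smul, map_smul, smul_eq_mul, mul_eq_zero] at hfx
    rcases hfx with ha | hfx
    · rw [show a = 0 from Subtype.ext ha, zero_smul]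
      exact zero_mem _
    · exact Submodule.smul_mem _ a (ih hfx)

theorem exists_disjoint_hull_sub_eq (hz : z ∈ Submodule.span k s) :
    ∃ t ⊆ s, ∃ u ⊆ s, Disjoint t u ∧ ∃ x ∈ hull k t, ∃ y ∈ hull k u, x - y = z := by
  obtain ⟨c, hc, rfl⟩ := Submodule.mem_span_set.1 hz
  refine ⟨{y ∈ s | 0 < c y}, Set.sep_subset _ _, {y ∈ s | c y < 0}, Set.sep_subset _ _,
    Set.disjoint_left.2 fun y hy hy' => hy.2.not_gt hy'.2,
    ∑ y ∈ c.support with 0 < c y, c y • y, ?_, ∑ y ∈ c.support with ¬ 0 < c y, -c y • y, ?_, ?_⟩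
  · refine sum_mem fun y hy => ?_
    rw [Finset.mem_filter] at hy
    exact PointedCone.smul_mem _ hy.2.le (subset_hull ⟨hc hy.1, hy.2⟩)
  · refine sum_mem fun y hy => ?_
    rw [Finset.mem_filter, not_lt] at hy
    exact PointedCone.smul_mem _ (neg_nonneg.2 hy.2)
      (subset_hull ⟨hc hy.1, hy.2.lt_of_ne (Finsupp.mem_support_iff.1 hy.1)⟩)
  · simp only [neg_smul, Finset.sum_neg_distrib, sub_neg_eq_add]
    exact Finset.sum_filter_add_sum_filter_not _ _ _

theorem exists_minimal_subset_hull (hR : R.Finite) :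
    ∃ Δ ⊆ R, R ⊆ hull k Δ ∧ ∀ β ∈ Δ, β ∉ hull k (Δ \ {β}) := by
  obtain ⟨Δ, hΔ⟩ := (hR.finite_subsets.subset fun Δ hΔ => hΔ.1 :
    {Δ | Δ ⊆ R ∧ R ⊆ hull k Δ}.Finite).exists_minimal ⟨R, subset_rfl, subset_hull⟩
  refine ⟨Δ, hΔ.prop.1, hΔ.prop.2, fun β hβ hmem => ?_⟩
  have hle : hull k Δ ≤ hull k (Δ \ {β}) := by
    refine Submodule.span_le.2 fun z hz => ?_
    rcases eq_or_ne z β with rfl | hne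
    · exact hmem
    · exact subset_hull ⟨hz, hne⟩
  exact (hΔ.le_of_le ⟨Set.sdiff_subset.trans hΔ.prop.1, hΔ.prop.2.trans hle⟩
    Set.sdiff_subset hβ).2 rfl

theorem smul_sub_notMem_hull {f : V →ₗ[k] k} (hf : ∀ y ∈ Δ, 0 ≤ f y) (hβ : β ∈ Δ)
    (hirr : β ∉ hull k (Δ \ {β})) (hy : y ∈ hull k (Δ \ {β})) (hfy : 0 < f y) (r : k) :
    r • β - y ∉ hull k Δ := by
  intro hmem
  rw [← Set.insert_sdiff_self_of_mem hβ, Submodule.mem_span_insert] at hmem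
  obtain ⟨⟨a, ha⟩, z, hz, heq⟩ := hmem
  have heq' : (r - a) • β = z + y := by
    rw [sub_smul, sub_eq_iff_eq_add, add_right_comm, ← sub_eq_iff_eq_add, heq, add_comm]
    rfl
  have hfz : 0 ≤ f z := apply_nonneg_of_mem_hull (fun y hy => hf y hy.1) hz
  have hpos : 0 < (r - a) * f β := by
    rw [← smul_eq_mul, ← map_smul, heq', map_add]
    exact add_pos_of_nonneg_of_pos hfz hfy
  refine hirr ((PointedCone.smul_mem_iff _ (pos_of_mul_pos_left hpos (hf β hβ))).1 ?_)
  rw [heq']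
  exact add_mem hz hy

theorem eq_zero_of_mem_hull_of_disjoint {b : LinearMap.BilinForm k V}
    (hb : ∀ x, b x x ≤ 0 → x = 0) (hΔ : Δ.Pairwise fun x y => b x y ≤ 0) (ht : t ⊆ Δ) (hu : u ⊆ Δ)
    (htu : Disjoint t u) (hxt : x ∈ hull k t) (hxu : x ∈ hull k u) : x = 0 := by
  have hle (y : V) (hy : y ∈ t) (z : V) (hz : z ∈ u) : 0 ≤ -b y z :=
    neg_nonneg.2 (hΔ (ht hy) (hu hz) (htu.ne_of_mem hy hz))
  refine hb x (neg_nonneg.1 (apply_nonneg_of_mem_hull (f := -b.flip x) (fun y hy => ?_) hxt))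
  exact apply_nonneg_of_mem_hull (f := -b y) (hle y hy) hxu

end Cones

/-! ### Cones of positive roots -/

section RootCones

/-- The hyperplane `x i = 0`, a wall of the positive orthant. -/
def coordHyperplane {B : Type*} (i : B) : Submodule ℝ (B → ℝ) :=
  LinearMap.ker (LinearMap.proj i : (B → ℝ) →ₗ[ℝ] ℝ)

theorem mem_coordHyperplane {B : Type*} {i : B} {x : B → ℝ} :
    x ∈ coordHyperplane i ↔ x i = 0 := Iff.rfl

open PointedCone (hull subset_hull)
open LinearMap (proj)

variable [Fintype B] {cs : CoxeterSystem M W} {i : B} {U U' : Submodule ℝ (B → ℝ)} {x : B → ℝ}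

/-- The convex cone spanned by the positive roots in the subspace `U`. -/
def rootCone (cs : CoxeterSystem M W) (U : Submodule ℝ (B → ℝ)) : PointedCone ℝ (B → ℝ) :=
  hull ℝ (posRootsIn cs U)

theorem rootCone_mono (h : U ≤ U') : rootCone cs U ≤ rootCone cs U' :=
  Submodule.span_mono fun _ hτ => ⟨hτ.1, h hτ.2⟩

theorem rootCone_subset : (rootCone cs U : Set (B → ℝ)) ⊆ U := fun _ hx =>
  Submodule.span_le.2 (fun _ hτ => hτ.2) (PointedCone.hull_le_span ℝ _ hx)

theorem nonneg_of_mem_rootCone (hx : x ∈ rootCone cs U) : 0 ≤ x :=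
  Submodule.span_le (p := PointedCone.positive ℝ (B → ℝ)).2 (fun _ hτ => hτ.1.2) hx

theorem geomRep_simple_mem_rootCone (hi : simpleRoot i ∉ U) (hx : x ∈ rootCone cs U) :
    geomRep cs (cs.simple i) x ∈ rootCone cs (U.comap (geomRep cs (cs.simple i)⁻¹)) := by
  refine Submodule.span_le (p := (rootCone cs _).comap (geomRep cs (cs.simple i))).2 ?_ hx
  rintro τ ⟨hτ, hτU⟩
  have hmem : geomRep cs (cs.simple i) τ ∈ U.comap (geomRep cs (cs.simple i)⁻¹) := by
    rwa [Submodule.mem_comap, Representation.inv_self_apply]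
  refine subset_hull ⟨?_, hmem⟩
  rcases hτ.simple_apply i with hpos | ⟨a, ha, rfl⟩
  · exact hpos
  · exact absurd ((U.smul_mem_iff ha.ne').1 hτU) hi

theorem geomRep_simple_eq_sub_add (i : B) (x : B → ℝ) : geomRep cs (cs.simple i) x =
    (x - x i • simpleRoot i) + geomRep cs (cs.simple i) x i • simpleRoot i := by
  simp only [geomRep_simple_apply, Pi.sub_apply, Pi.smul_apply, simpleRoot_self]
  module

variable [Finite W]

local notation "ip" => invInner (geomRep cs)

theorem exists_obtuse_subset_hull (cs : CoxeterSystem M W) (U : Submodule ℝ (B → ℝ)) :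
    ∃ Δ ⊆ posRootsIn cs U, posRootsIn cs U ⊆ hull ℝ Δ ∧
      Δ.Pairwise fun β β' => invInner (geomRep cs) β β' ≤ 0 := by
  obtain ⟨Δ, hΔU, hUΔ, hirr⟩ := exists_minimal_subset_hull (k := ℝ)
    ((finite_setOf_isRoot cs).subset fun τ (hτ : τ ∈ posRootsIn cs U) => hτ.1.1)
  refine ⟨Δ, hΔU, hUΔ, fun β hβ β' hβ' hne => le_of_not_gt fun hpos => ?_⟩
  let height : (B → ℝ) →ₗ[ℝ] ℝ := ∑ b, proj b
  have hheight (τ : B → ℝ) (hτ : τ ∈ Δ) : 0 < height τ := by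
    simpa [height] using (hΔU hτ).1.sum_pos
  obtain ⟨t, ht⟩ := (hΔU hβ).1.1.exists_isRootReflection
  let c := 2 * invInner (geomRep cs) β' β / invInner (geomRep cs) β β
  have hc : 0 < c := div_pos (mul_pos two_pos (invInner_comm (ρ := geomRep cs) β β' ▸ hpos))
    (invInner_self_pos (hΔU hβ).1.1.ne_zero)
  have hroot : IsRoot cs (β' - c • β) := ht.reflectsIn β' ▸ (hΔU hβ').1.1.map t
  have hmem : β' - c • β ∈ U := U.sub_mem (hΔU hβ').2 (U.smul_mem _ (hΔU hβ).2)
  rcases hroot.isPosRoot_or_neg with hpos | hneg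
  · refine smul_sub_notMem_hull (fun τ hτ => (hheight τ hτ).le) hβ' (hirr β' hβ')
      (PointedCone.smul_mem _ hc.le (subset_hull ⟨hβ, hne⟩)) ?_ 1 ?_
    · rw [map_smul, smul_eq_mul]
      exact mul_pos hc (hheight β hβ)
    · rw [one_smul]
      exact hUΔ ⟨hpos, hmem⟩
  · refine smul_sub_notMem_hull (fun τ hτ => (hheight τ hτ).le) hβ (hirr β hβ)
      (subset_hull ⟨hβ', hne.symm⟩) (hheight β' hβ') c ?_
    rw [← neg_sub]
    exact hUΔ ⟨hneg, U.neg_mem hmem⟩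

omit [Fintype B] in
theorem simpleRoot_mem_hull_setOf_eq_smul [Finite B] {Δ : Set (B → ℝ)} (hΔ : ∀ δ ∈ Δ, 0 ≤ δ)
    (hi : simpleRoot i ∈ hull ℝ Δ) : simpleRoot i ∈ hull ℝ {δ ∈ Δ | δ = δ i • simpleRoot i} := by
  classical
  have := Fintype.ofFinite B
  let f : (B → ℝ) →ₗ[ℝ] ℝ := ∑ b ∈ Finset.univ.erase i, proj b
  have hf (x : B → ℝ) : f x = ∑ b ∈ Finset.univ.erase i, x b := by simp [f]
  have hfΔ (δ : B → ℝ) (hδ : δ ∈ Δ) : 0 ≤ f δ := by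
    rw [hf]
    exact Finset.sum_nonneg fun b _ => hΔ δ hδ b
  have hfi : f (simpleRoot i) = 0 := by
    rw [hf]
    exact Finset.sum_eq_zero fun b hb => simpleRoot_of_ne (Finset.ne_of_mem_erase hb)
  refine Submodule.span_mono ?_ (mem_hull_setOf_eq_zero hfΔ hi hfi)
  rintro δ ⟨hδ, h0⟩
  rw [hf, Finset.sum_eq_zero_iff_of_nonneg fun b _ => hΔ δ hδ b] at h0
  exact ⟨hδ, eq_smul_simpleRoot fun b hb => h0 b (Finset.mem_erase.2 ⟨hb, Finset.mem_univ b⟩)⟩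

/- Otherwise `β - β i • simpleRoot i = y - z` with `y` and `z` in the cones of disjoint parts of the
obtuse set, and `β + z = β i • simpleRoot i + y` lies in two cones meeting only in `0`. -/
theorem eq_smul_simpleRoot_of_obtuse {Δ : Set (B → ℝ)} {β : B → ℝ} (hΔ : ∀ δ ∈ Δ, 0 ≤ δ ∧ δ ≠ 0)
    (hobt : Δ.Pairwise fun δ δ' => ip δ δ' ≤ 0) (hi : simpleRoot i ∈ hull ℝ Δ) (hβ : β ∈ Δ)
    (hβi : β i ≠ 0) (hspan : β - β i • simpleRoot i ∈ Submodule.span ℝ {δ ∈ Δ | δ i = 0}) :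
    β = β i • simpleRoot i := by
  by_contra hne
  obtain ⟨t, ht, u, hu, htu, y, hy, z, hz, hyz⟩ := exists_disjoint_hull_sub_eq hspan
  let r : Set (B → ℝ) := {δ ∈ Δ | δ = δ i • simpleRoot i}
  have hur : Disjoint u r := Set.disjoint_left.2 fun δ hδ hδr => (hΔ δ hδr.1).2 <| by
    rw [hδr.2, (hu hδ).2, zero_smul]
  have hdisj : Disjoint (insert β u) (r ∪ t) :=
    Set.disjoint_insert_left.2 ⟨fun h => h.elim (fun h => hne h.2) fun h => hβi (ht h).2,
      Set.disjoint_union_right.2 ⟨hur, htu.symm⟩⟩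
  have heq : β + z = β i • simpleRoot i + y := by
    rw [← sub_eq_sub_iff_add_eq_add.1 hyz, add_comm]
  have hleft : β + z ∈ hull ℝ (insert β u) := add_mem (subset_hull (Set.mem_insert β u))
    (Submodule.span_mono (Set.subset_insert β u) hz)
  have hright : β + z ∈ hull ℝ (r ∪ t) := by
    rw [heq]
    exact add_mem (PointedCone.smul_mem _ ((hΔ β hβ).1 i) (Submodule.span_mono
      Set.subset_union_left (simpleRoot_mem_hull_setOf_eq_smul (fun δ hδ => (hΔ δ hδ).1) hi)))
      (Submodule.span_mono Set.subset_union_right hy)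
  have hzero := eq_zero_of_mem_hull_of_disjoint (fun _ => eq_zero_of_invInner_self_nonpos) hobt
    (Set.insert_subset hβ (hu.trans (Set.sep_subset _ _)))
    (Set.union_subset (Set.sep_subset _ _) (ht.trans (Set.sep_subset _ _))) hdisj hleft hright
  have hzi : 0 ≤ z i := apply_nonneg_of_mem_hull (f := proj i) (fun δ hδ => (hu hδ).2.ge) hz
  have hsum : β i + z i = 0 := congrFun hzero i
  exact hβi (le_antisymm (by linarith) ((hΔ β hβ).1 i))

theorem sub_smul_simpleRoot_mem_rootCone (hi : simpleRoot i ∈ U)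
    (hU : U ⊓ coordHyperplane i ≤ Submodule.span ℝ (posRootsIn cs (U ⊓ coordHyperplane i)))
    (hx : x ∈ rootCone cs U) : x - x i • simpleRoot i ∈ rootCone cs (U ⊓ coordHyperplane i) := by
  obtain ⟨Δ, hΔU, hUΔ, hobt⟩ := exists_obtuse_subset_hull cs U
  have hface : posRootsIn cs (U ⊓ coordHyperplane i) ⊆ hull ℝ {δ ∈ Δ | δ i = 0} := fun τ hτ => by
    have hnonneg (δ : B → ℝ) (hδ : δ ∈ Δ) : 0 ≤ (proj i : (B → ℝ) →ₗ[ℝ] ℝ) δ := (hΔU hδ).1.2 i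
    have hτface := mem_hull_setOf_eq_zero hnonneg (hUΔ ⟨hτ.1, hτ.2.1⟩) hτ.2.2
    exact hτface
  have hspan : U ⊓ coordHyperplane i ≤ Submodule.span ℝ {δ ∈ Δ | δ i = 0} :=
    hU.trans (Submodule.span_le.2 (hface.trans (PointedCone.hull_le_span ℝ _)))
  let f : (B → ℝ) →ₗ[ℝ] (B → ℝ) :=
    LinearMap.id - (proj i : (B → ℝ) →ₗ[ℝ] ℝ).smulRight (simpleRoot i)
  have hf (y : B → ℝ) : f y = y - y i • simpleRoot i := rfl
  have hfΔ (β : B → ℝ) (hβ : β ∈ Δ) : f β ∈ rootCone cs (U ⊓ coordHyperplane i) := by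
    rw [hf]
    by_cases hβi : β i = 0
    · rw [hβi, zero_smul, sub_zero]
      exact subset_hull ⟨(hΔU hβ).1, (hΔU hβ).2, hβi⟩
    · have hmem : β - β i • simpleRoot i ∈ U ⊓ coordHyperplane i :=
        ⟨U.sub_mem (hΔU hβ).2 (U.smul_mem _ hi), by simp [coordHyperplane, simpleRoot_self]⟩
      rw [sub_eq_zero.2 (eq_smul_simpleRoot_of_obtuse
        (fun δ hδ => ⟨(hΔU hδ).1.2, (hΔU hδ).1.1.ne_zero⟩) hobt
        (hUΔ ⟨isPosRoot_simpleRoot cs i, hi⟩) hβ hβi (hspan hmem))]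
      exact zero_mem _
  have hΔcone : hull ℝ Δ ≤ (rootCone cs (U ⊓ coordHyperplane i)).comap f := Submodule.span_le.2 hfΔ
  have hUcone : rootCone cs U ≤ hull ℝ Δ := Submodule.span_le.2 hUΔ
  exact hΔcone (hUcone hx)

end RootCones

/-! ### The least element moving a nonnegative vector -/

section LeastMover

variable [Fintype B] {cs : CoxeterSystem M W} {α γ : W} {i : B} {l : List B} {x : B → ℝ}

local notation "mov" => movedSpace (geomRep cs)

/-- Some `δ ∈ [1,γ]` moves `x` and lies below every `α ∈ [1,γ]` that moves `x` positively, i.e. for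
which `x` is a nonnegative combination of positive roots moved by `α`. -/
def HasLeastMover (cs : CoxeterSystem M W) (γ : W) (x : B → ℝ) : Prop :=
  ∃ δ, rle cs δ γ ∧ x ∈ movedSpace (geomRep cs) δ ∧
    ∀ α, rle cs α γ → x ∈ rootCone cs (movedSpace (geomRep cs) α) → rle cs δ α

theorem hasLeastMover_zero (γ : W) : HasLeastMover cs γ 0 :=
  ⟨1, one_rle γ, zero_mem _, fun α _ _ => one_rle α⟩

variable [Finite W]

theorem movedSpace_simple_inv_mul (hi : i ∉ l) (hα : rle cs α (cs.wordProd (i :: l)))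
    (hαi : simpleRoot i ∈ mov α) :
    mov ((cs.simple i)⁻¹ * α) = mov α ⊓ coordHyperplane i := by
  have hs := isRootReflection_simple cs i
  have hle : mov ((cs.simple i)⁻¹ * α) ≤ coordHyperplane i := by
    rw [hs.movedSpace_inv_mul hαi hα, cs.wordProd_cons, inv_mul_cancel_left]
    exact inf_le_right.trans fun y hy =>
      mem_coordHyperplane.2 (apply_eq_zero_of_mem_movedSpace_wordProd hy hi)
  have hdisj : Disjoint (ℝ ∙ simpleRoot i) (coordHyperplane i) := by
    rw [disjoint_comm, Submodule.disjoint_span_singleton' (simpleRoot_ne_zero i),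
      mem_coordHyperplane, simpleRoot_self]
    exact one_ne_zero
  rw [(hs.rle_iff.2 hαi).movedSpace_eq_sup, movedSpace_simple, sup_comm,
    sup_inf_assoc_of_le _ hle, hdisj.eq_bot, sup_bot_eq]

theorem sub_smul_simpleRoot_mem_rootCone_inv_mul (hi : i ∉ l)
    (hα : rle cs α (cs.wordProd (i :: l))) (hαi : simpleRoot i ∈ mov α)
    (hx : x ∈ rootCone cs (mov α)) :
    x - x i • simpleRoot i ∈ rootCone cs (mov ((cs.simple i)⁻¹ * α)) := by
  have hspan := movedSpace_le_span_posRootsIn (cs := cs) ((cs.simple i)⁻¹ * α)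
  rw [movedSpace_simple_inv_mul hi hα hαi] at hspan ⊢
  exact sub_smul_simpleRoot_mem_rootCone hαi hspan hx

theorem geomRep_simple_mem_rootCone_conj (hi : i ∉ l) (hα : rle cs α (cs.wordProd (i :: l)))
    (hx : x ∈ rootCone cs (mov α)) (hxi : 0 ≤ geomRep cs (cs.simple i) x i) :
    geomRep cs (cs.simple i) x ∈
      rootCone cs (mov (cs.simple i * α * (cs.simple i)⁻¹)) := by
  rw [movedSpace_conj]
  by_cases hαi : simpleRoot i ∈ mov α
  · have hstable : mov α ≤ (mov α).comap (geomRep cs (cs.simple i)⁻¹) := fun y hy => by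
      rw [Submodule.mem_comap, cs.inv_simple, geomRep_simple_apply]
      exact sub_mem hy (Submodule.smul_mem _ _ hαi)
    have hproj := sub_smul_simpleRoot_mem_rootCone_inv_mul hi hα hαi hx
    rw [movedSpace_simple_inv_mul hi hα hαi] at hproj
    rw [geomRep_simple_eq_sub_add]
    exact add_mem (rootCone_mono (inf_le_left.trans hstable) hproj) (PointedCone.smul_mem _ hxi
      (PointedCone.subset_hull ⟨isPosRoot_simpleRoot cs i, hstable hαi⟩))
  · exact geomRep_simple_mem_rootCone hαi hx

theorem hasLeastMover_cons_of_neg (hi : i ∉ l) (hxi : geomRep cs (cs.simple i) x i < 0)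
    (h : HasLeastMover cs (cs.wordProd l) (x - x i • simpleRoot i)) :
    HasLeastMover cs (cs.wordProd (i :: l)) x := by
  obtain ⟨δ, hδ, hxδ, hleast⟩ := h
  have hs : rle cs (cs.simple i) (cs.wordProd (i :: l)) := by
    rw [cs.wordProd_cons, rle_mul_right_iff]
    exact rlen_simple_mul_wordProd hi
  have hcancel : (cs.simple i)⁻¹ * cs.wordProd (i :: l) = cs.wordProd l := by
    rw [cs.wordProd_cons, inv_mul_cancel_left]
  obtain ⟨hsδ, hδl⟩ := hs.rle_mul_and_mul_rle (hcancel ▸ hδ)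
  refine ⟨cs.simple i * δ, hδl, ?_, fun α hα hx => ?_⟩
  · rw [hsδ.movedSpace_eq_sup, inv_mul_cancel_left, movedSpace_simple, ← add_sub_cancel _ x]
    exact Submodule.add_mem_sup (Submodule.smul_mem _ _ (Submodule.mem_span_singleton_self _)) hxδ
  · have hαi : simpleRoot i ∈ mov α := by
      by_contra hαi
      exact hxi.not_ge (nonneg_of_mem_rootCone (geomRep_simple_mem_rootCone hαi hx) i)
    have hsα := (isRootReflection_simple cs i).rle_iff.2 hαi
    refine (hsα.rle_mul_and_mul_rle (hleast _ ?_ ?_)).2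
    · exact hcancel ▸ hsα.inv_mul_rle_inv_mul hα
    · exact sub_smul_simpleRoot_mem_rootCone_inv_mul hi hα hαi hx

theorem hasLeastMover_cons_of_nonneg (hi : i ∉ l) (hxi : 0 ≤ geomRep cs (cs.simple i) x i)
    (h : HasLeastMover cs (cs.wordProd (l ++ [i])) (geomRep cs (cs.simple i) x)) :
    HasLeastMover cs (cs.wordProd (i :: l)) x := by
  obtain ⟨δ, hδ, hxδ, hleast⟩ := h
  have hconj : cs.simple i * cs.wordProd (i :: l) * (cs.simple i)⁻¹ = cs.wordProd (l ++ [i]) := by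
    simp [cs.wordProd_cons, cs.wordProd_append]
  have hδconj : cs.simple i * ((cs.simple i)⁻¹ * δ * cs.simple i) * (cs.simple i)⁻¹ = δ := by group
  refine ⟨(cs.simple i)⁻¹ * δ * cs.simple i, ?_, ?_, fun α hα hx => ?_⟩
  · rwa [← rle_conj_iff (cs.simple i), hδconj, hconj]
  · rwa [← inv_inv (cs.simple i), inv_inv (cs.simple i)⁻¹, movedSpace_conj, inv_inv]
  · rw [← rle_conj_iff (cs.simple i), hδconj]
    refine hleast _ ?_ (geomRep_simple_mem_rootCone_conj hi hα hx hxi)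
    rwa [← hconj, rle_conj_iff]

omit [Finite W] in
theorem geomRep_simple_nonneg (hx : 0 ≤ x) (hxi : 0 ≤ geomRep cs (cs.simple i) x i) :
    0 ≤ geomRep cs (cs.simple i) x := fun j => by
  rcases eq_or_ne j i with rfl | hj
  · exact hxi
  · rw [geomRep_simple_apply_of_ne cs hj]
    exact hx j

theorem not_hasLeastMover_rotate (hl : (i :: l).Nodup) (hx : 0 ≤ x)
    (hsupp : ∀ j ∉ i :: l, x j = 0)
    (hrec : ∀ y, 0 ≤ y → (∀ j ∉ l, y j = 0) → HasLeastMover cs (cs.wordProd l) y)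
    (h : ¬ HasLeastMover cs (cs.wordProd (i :: l)) x) :
    0 ≤ geomRep cs (cs.simple i) x ∧ (∀ j ∉ l ++ [i], geomRep cs (cs.simple i) x j = 0) ∧
      ¬ HasLeastMover cs (cs.wordProd (l ++ [i])) (geomRep cs (cs.simple i) x) := by
  have hi : i ∉ l := (List.nodup_cons.1 hl).1
  have hxi : 0 ≤ geomRep cs (cs.simple i) x i := by
    by_contra hneg
    refine h (hasLeastMover_cons_of_neg hi (not_le.1 hneg) (hrec _ (fun j => ?_) fun j hj => ?_))
    · rcases eq_or_ne j i with rfl | hji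
      · simp [simpleRoot_self]
      · simpa [simpleRoot_of_ne hji] using hx j
    · rcases eq_or_ne j i with rfl | hji
      · simp [simpleRoot_self]
      · simpa [simpleRoot_of_ne hji] using hsupp j (by simp [hji, hj])
  refine ⟨geomRep_simple_nonneg hx hxi, fun j hj => ?_,
    fun h' => h (hasLeastMover_cons_of_nonneg hi hxi h')⟩
  rw [List.mem_append, List.mem_singleton, not_or] at hj
  rw [geomRep_simple_apply_of_ne cs hj.2]
  exact hsupp j (by simp [hj])

omit [Fintype B] [Finite W] in
theorem rotate_wordProd {k V : Type*} [CommSemiring k] [AddCommMonoid V] [Module k V]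
    {ρ : Representation k W V} {Q : List B → V → Prop} {A D : List B} {x : V}
    (hQ : ∀ i l x, Q (i :: l) x → Q (l ++ [i]) (ρ (cs.simple i) x)) (h : Q (A ++ D) x) :
    Q (D ++ A) (ρ (cs.wordProd A)⁻¹ x) := by
  induction A generalizing D x with
  | nil => simpa using h
  | cons i A ih =>
    have := ih (D := D ++ [i]) (by simpa using hQ i _ x h)
    rwa [List.append_assoc, List.singleton_append, ← Module.End.mul_apply, ← map_mul,
      ← cs.inv_simple i, ← mul_inv_rev, ← cs.wordProd_cons] at this

omit [Fintype B] [Finite W] in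
theorem rotate_wordProd_pow {k V : Type*} [CommSemiring k] [AddCommMonoid V] [Module k V]
    {ρ : Representation k W V} {Q : List B → V → Prop} {x : V}
    (hQ : ∀ i l x, Q (i :: l) x → Q (l ++ [i]) (ρ (cs.simple i) x)) (h : Q l x) (n : ℕ) :
    Q l (ρ ((cs.wordProd l)⁻¹ ^ n) x) := by
  induction n with
  | zero => simpa using h
  | succ n ih =>
    rw [pow_succ', map_mul, Module.End.mul_apply]
    exact rotate_wordProd (D := []) hQ (by rwa [List.append_nil])

/- If no simple reflection ever made a coordinate negative, the orbit of `x` under the inverse of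
`wordProd l` would be nonnegative, which forces `x = 0`. -/
theorem hasLeastMover_wordProd (hl : l.Nodup) (hx : 0 ≤ x) (hsupp : ∀ i ∉ l, x i = 0) :
    HasLeastMover cs (cs.wordProd l) x := by
  induction hn : l.length generalizing l x with
  | zero =>
    obtain rfl := List.eq_nil_of_length_eq_zero hn
    rw [show x = 0 from funext fun i => hsupp i List.not_mem_nil]
    exact hasLeastMover_zero _
  | succ n ih =>
    by_contra hfail
    let Q (l : List B) (x : B → ℝ) : Prop := l.Nodup ∧ l.length = n + 1 ∧ 0 ≤ x ∧
      (∀ i ∉ l, x i = 0) ∧ ¬ HasLeastMover cs (cs.wordProd l) x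
    have hQ (i : B) (l : List B) (x : B → ℝ) :
        Q (i :: l) x → Q (l ++ [i]) (geomRep cs (cs.simple i) x) := by
      rintro ⟨hl, hn, hx, hsupp, hfail⟩
      have hperm := List.perm_append_singleton i l
      exact ⟨hperm.nodup_iff.2 hl, hperm.length_eq.trans hn,
        not_hasLeastMover_rotate hl hx hsupp (fun y hy hys =>
          ih (List.nodup_cons.1 hl).2 hy hys (Nat.succ.inj hn)) hfail⟩
    have hmov : x ∈ mov (cs.wordProd l)⁻¹ := by
      rw [movedSpace_inv]
      exact (mem_movedSpace_wordProd_iff hl).2 hsupp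
    have hzero := eq_zero_of_forall_apply_pow_nonneg hmov (isOfFinOrder_of_finite _)
      fun k => (rotate_wordProd_pow hQ ⟨hl, hn, hx, hsupp, hfail⟩ k).2.2.1
    exact hfail (hzero ▸ hasLeastMover_zero _)

end LeastMover

/-! ### The lattice property -/

section Lattice

variable {cs : CoxeterSystem M W} {γ : W}

theorem exists_isGLB_wordProd [Finite B] [Finite W] {l : List B} (hl : l.Nodup)
    (A : Set (NCInterval cs (cs.wordProd l))) : ∃ δ, IsGLB A δ := by
  have := Fintype.ofFinite B
  let U : Submodule ℝ (B → ℝ) := movedSpace (geomRep cs) (cs.wordProd l) ⊓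
    ⨅ a ∈ A, movedSpace (geomRep cs) a
  have le_U_iff {V : Submodule ℝ (B → ℝ)} : V ≤ U ↔
      V ≤ movedSpace (geomRep cs) (cs.wordProd l) ∧ ∀ a ∈ A, V ≤ movedSpace (geomRep cs) a := by
    simp only [U, le_inf_iff, le_iInf_iff]
  obtain ⟨hUl, hUA⟩ := le_U_iff.1 le_rfl
  obtain ⟨x, hx, hgeneric⟩ := exists_mem_hull_forall_mem_imp_subset (movedSpace (geomRep cs))
    ((finite_setOf_isRoot cs).subset fun τ (hτ : τ ∈ posRootsIn cs U) => hτ.1.1)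
  obtain ⟨δ, hδ, hxδ, hleast⟩ := hasLeastMover_wordProd (cs := cs) hl (nonneg_of_mem_rootCone hx)
    ((mem_movedSpace_wordProd_iff hl).1 (hUl (rootCone_subset hx)))
  refine ⟨⟨δ, hδ⟩, fun a ha => hleast a a.2 (rootCone_mono (hUA a ha) hx), fun b hb => ?_⟩
  have hbU : movedSpace (geomRep cs) b ≤ U :=
    le_U_iff.2 ⟨b.2.movedSpace_le, fun a ha => rle.movedSpace_le (hb ha)⟩
  exact rle_of_movedSpace_le b.2 hδ ((movedSpace_le_span_posRootsIn b.1).trans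
    (Submodule.span_le.2 fun τ hτ => hgeneric δ hxδ ⟨hτ.1, hbU hτ.2⟩))

/-- A conjugate of a product of distinct simple reflections, that is a Coxeter element of a
parabolic subgroup. -/
def IsParabolicCoxeterElement (cs : CoxeterSystem M W) (γ : W) : Prop :=
  ∃ (v : W) (l : List B), l.Nodup ∧ γ = v * cs.wordProd l * v⁻¹

theorem IsParabolicCoxeterElement.exists_isGLB [Finite B] [Finite W]
    (hγ : IsParabolicCoxeterElement cs γ) (A : Set (NCInterval cs γ)) : ∃ δ, IsGLB A δ := by
  obtain ⟨v, l, hl, rfl⟩ := hγ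
  let e := NCInterval.conjIso cs (cs.wordProd l) v
  obtain ⟨δ, hδ⟩ := exists_isGLB_wordProd hl (e ⁻¹' A)
  exact ⟨e δ, e.isGLB_preimage.1 hδ⟩

end Lattice

theorem common_left_divisor_join_general [Finite B] [Finite W] {cs : CoxeterSystem M W} {γ : W}
    (hγ : IsParabolicCoxeterElement cs γ) {A : Set W} (hA : ∀ a ∈ A, rle cs a γ)
    {P : PosMonoid cs γ} (hP : ∀ a ∈ A, pgen cs γ a ∣ P) :
    ∃ j, IsIntervalLUB cs γ A j ∧ pgen cs γ j ∣ P := by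
  obtain ⟨j, hj, hjP⟩ := exists_isLUB_pgen_dvd hγ.exists_isGLB
    (A := Subtype.val ⁻¹' A) fun a ha => hP a ha
  exact ⟨j, isIntervalLUB_of_isLUB hA hj, hjP⟩

/-- Brady's Corollary on common left divisors: if `P = ⟨a₁⟩X₁ = ⋯ = ⟨a_k⟩X_k`
then `P = ⟨a₁ ∨ ⋯ ∨ a_k⟩ Z` for some positive word `Z`. -/
theorem common_left_divisor_join [Fintype B] [Fintype W] (cs : CoxeterSystem M W) (γ : W)
    (hγ : IsCoxeterElement cs γ) (k : ℕ) (hk : 0 < k) (a : Fin k → W)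
    (ha : ∀ i, a i ≠ 1 ∧ rle cs (a i) γ)
    (P : PosMonoid cs γ) (X : Fin k → PosMonoid cs γ)
    (hP : ∀ i, P = PresentedMonoid.of (posRels cs γ) ⟨a i, ha i⟩ * X i) :
    ∃ j : W, rle cs j γ ∧ IsIntervalLUB cs γ (Set.range a) j ∧
      ∃ Z : PosMonoid cs γ, P = pgen cs γ j * Z := by
  obtain ⟨v, l, hl, -, h⟩ := hγ
  obtain ⟨j, hj, hjP⟩ := common_left_divisor_join_general ⟨v, l, hl, h⟩
    (Set.forall_mem_range.2 fun i => (ha i).2)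
    (Set.forall_mem_range.2 fun i => ⟨X i, by rw [pgen_coe ⟨a i, ha i⟩]; exact hP i⟩)
  exact ⟨j, hj.1, hj, hjP⟩
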